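/- arXiv:2605.14286 — 8 statements merged into one kernel-verified Lean document; each statement's English description precedes it below -/
import Mathlib

section
/- Let M be a finitely generated 𝔖-module such that for every integer j ≥ 0 the quotient gr_p^j M = p^j M / p^{j+1} M is a finite free module over 𝔖/(p) ≅ k[[z]]. Then there exist integers m, n ≥ 0 and integers a_1, …, a_n ≥ 1 such that M is isomorphic as an 𝔖-module to 𝔖^{⊕m} ⊕ ⊕_{i=1}^{n} 𝔖/(p^{a_i}). -/
theorem pelem_flag {D : Type*} [CommRing D] [IsDomain D] [IsPrincipalIdealRing D]
    {V : Type*} [AddCommGroup V] [Module D V] [Module.Finite D V]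
    (K : ℕ → Submodule D V) (hmono : Monotone K) (h0 : K 0 = ⊥)
    (htf : ∀ j (d : D) v, d • v ∈ K j → d = 0 ∨ v ∈ K j) (N : ℕ) :
    ∃ (ι : Type) (_ : Fintype ι) (b : ι → V) (a : ι → ℕ), LinearIndependent D b ∧
      (∀ i, a i ≤ N) ∧ ∀ j ≤ N, K j = Submodule.span D (b '' {i | a i ≤ j}) := by
  induction N with
  | zero =>
    refine ⟨Empty, inferInstance, Empty.elim, Empty.elim, linearIndependent_empty_type,
      fun i => i.elim, fun j hj => ?_⟩
    obtain rfl : j = 0 := by omega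
    rw [h0, Set.eq_empty_of_isEmpty {i : Empty | _}, Set.image_empty, Submodule.span_empty]
  | succ N ih =>
    obtain ⟨ι, _, b, a, hli, ha, hK⟩ := ih
    have hKN : K N = Submodule.span D (Set.range b) := by
      rw [hK N le_rfl, ← Set.image_univ]
      congr 2
      ext i; simp [ha i]
    have hbK : ∀ i, b i ∈ K N := fun i => hKN ▸ Submodule.subset_span ⟨i, rfl⟩
    have : Module.IsTorsionFree D (V ⧸ K N) := by
      refine .of_smul_eq_zero fun d v hv => ?_
      obtain ⟨v, rfl⟩ := Submodule.Quotient.mk_surjective _ v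
      rw [← Submodule.Quotient.mk_smul, Submodule.Quotient.mk_eq_zero] at hv
      rcases htf N d v hv with h | h
      · exact Or.inl h
      · exact Or.inr ((Submodule.Quotient.mk_eq_zero _).2 h)
    let K' := (K (N + 1)).map (K N).mkQ
    have : Module.Free D K' := inferInstance
    let c := Module.finBasis D K'
    have hc : ∀ i, ∃ x ∈ K (N + 1), (K N).mkQ x = (c i : V ⧸ K N) := fun i => (c i).2
    choose g hg hgc using hc
    refine ⟨ι ⊕ Fin (Module.finrank D K'), inferInstance, Sum.elim b g,
      Sum.elim a (fun _ => N + 1), ?_, ?_, ?_⟩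
    · have h1 : LinearIndependent D (fun i => (⟨b i, hbK i⟩ : K N)) :=
        LinearIndependent.of_comp (K N).subtype hli
      refine h1.sumElim_of_quotient g ?_
      have : (Submodule.Quotient.mk (p := K N) ∘ g) = K'.subtype ∘ c := by
        ext i; exact hgc i
      rw [this]
      exact c.linearIndependent.map' _ K'.ker_subtype
    · rintro (i | i)
      · exact (ha i).trans (Nat.le_succ _)
      · simp
    · intro j hj
      rcases Nat.lt_or_ge N j with h | h
      · obtain rfl : j = N + 1 := by omega
        apply le_antisymm
        · intro x hx
          have hx' : (⟨(K N).mkQ x, ⟨x, hx, rfl⟩⟩ : K') ∈ Submodule.span D (Set.range c) := by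
            rw [c.span_eq]; trivial
          obtain ⟨w, hw⟩ := (Submodule.mem_span_range_iff_exists_fun D).1 hx'
          have hw' : ∑ i, w i • (c i : V ⧸ K N) = (K N).mkQ x := by
            simpa using congrArg Subtype.val hw
          have h2 : x - ∑ i, w i • g i ∈ K N := by
            rw [← Submodule.Quotient.mk_eq_zero, ← Submodule.mkQ_apply, map_sub, ← hw']
            simp [← hgc]
          rw [← sub_add_cancel x (∑ i, w i • g i)]
          refine add_mem ?_ (sum_mem fun i _ => Submodule.smul_mem _ _
            (Submodule.subset_span ⟨Sum.inr i, by simp, rfl⟩))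
          refine Submodule.span_mono ?_ (hKN.le h2)
          rintro _ ⟨i, rfl⟩
          exact ⟨Sum.inl i, (ha i).trans (Nat.le_succ _), rfl⟩
        · rw [Submodule.span_le]
          rintro _ ⟨i | i, -, rfl⟩
          · exact hmono (Nat.le_succ _) (hbK i)
          · exact hg i
      · rw [hK j h]
        congr 1
        ext v; constructor
        · rintro ⟨i, hi, rfl⟩
          exact ⟨Sum.inl i, hi, rfl⟩
        · rintro ⟨i | i, hi, rfl⟩
          · exact ⟨i, hi, rfl⟩
          · simp at hi; omega

theorem pelem_ker {p : ℕ} [Fact p.Prime] {k : Type*} [Field k] [CharP k p] [PerfectField k] :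
    RingHom.ker (PowerSeries.map (WittVector.constantCoeff : WittVector p k →+* k)) =
      Ideal.span {(p : PowerSeries (WittVector p k))} := by
  have : ExpChar k p := ExpChar.prime Fact.out
  ext f
  rw [RingHom.mem_ker, Ideal.mem_span_singleton]
  constructor
  · intro h
    have hc : ∀ n, ∃ y, PowerSeries.coeff n f = (p : WittVector p k) * y := fun n => by
      have : PowerSeries.coeff n f ∈ RingHom.ker (WittVector.constantCoeff : WittVector p k →+* k) := by
        rw [RingHom.mem_ker, ← PowerSeries.coeff_map, h, map_zero]
      rw [WittVector.ker_constantCoeff, Ideal.mem_span_singleton] at this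
      exact this
    choose y hy using hc
    refine ⟨PowerSeries.mk y, ?_⟩
    ext1 n
    rw [← map_natCast (PowerSeries.C (R := WittVector p k)), PowerSeries.coeff_C_mul, hy,
      PowerSeries.coeff_mk]
  · rintro ⟨g, rfl⟩
    rw [map_mul, map_natCast, ← map_natCast (PowerSeries.C (R := k)), CharP.cast_eq_zero, map_zero,
      zero_mul]

theorem pelem_hausdorff {p : ℕ} [Fact p.Prime] {k : Type*} [Field k] [CharP k p] 
    (f : PowerSeries (WittVector p k)) (h : ∀ j : ℕ, (p : PowerSeries (WittVector p k)) ^ j ∣ f) :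
    f = 0 := by
  ext n m
  obtain ⟨g, rfl⟩ := h (m + 1)
  rw [← map_natCast (PowerSeries.C (R := WittVector p k)), ← map_pow, PowerSeries.coeff_C_mul,
    mul_comm, WittVector.mul_pow_charP_coeff_zero _ (Nat.lt_succ_self m)]
  simp

theorem pelem_jac {p : ℕ} [Fact p.Prime] {k : Type*} [Field k] [CharP k p] [PerfectField k] :
    Ideal.span {(p : PowerSeries (WittVector p k))} ≤ Ideal.jacobson ⊥ := by
  rw [Ideal.span_singleton_le_iff_mem, Ideal.mem_jacobson_bot]
  intro y
  rw [PowerSeries.isUnit_iff_constantCoeff]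
  apply WittVector.isUnit_of_coeff_zero_ne_zero
  rw [← WittVector.constantCoeff_apply]
  simp only [map_add, map_mul, map_natCast, map_one, CharP.cast_eq_zero, zero_mul, zero_add]
  exact one_ne_zero

theorem pelem_surj {p : ℕ} [Fact p.Prime] {k : Type*} [Field k] [CharP k p] :
    Function.Surjective (PowerSeries.map (WittVector.constantCoeff : WittVector p k →+* k)) :=
  PowerSeries.map_surjective _ (WittVector.constantCoeff_surjective p)

theorem pelem_dom {p : ℕ} [Fact p.Prime] {k : Type*} [Field k] [CharP k p] [PerfectField k] :
    IsDomain (PowerSeries (WittVector p k) ⧸ Ideal.span {(p : PowerSeries (WittVector p k))}) := by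
  rw [← pelem_ker]
  exact MulEquiv.isDomain _
    (RingHom.quotientKerEquivOfSurjective (pelem_surj (p := p) (k := k))).toMulEquiv

theorem pelem_pid {p : ℕ} [Fact p.Prime] {k : Type*} [Field k] [CharP k p] [PerfectField k] :
    IsPrincipalIdealRing
      (PowerSeries (WittVector p k) ⧸ Ideal.span {(p : PowerSeries (WittVector p k))}) := by
  rw [← pelem_ker]
  exact IsPrincipalIdealRing.of_surjective
    (RingHom.quotientKerEquivOfSurjective (pelem_surj (p := p) (k := k))).symm.toRingHom
    (RingEquiv.surjective _)

theorem pelem_abs {R : Type*} [CommRing R] (π : R)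
    {D : Type*} [CommRing D] [IsDomain D] [IsPrincipalIdealRing D]
    (ρ : R →+* D) (hρ : Function.Surjective ρ) (hρk : ∀ r, ρ r = 0 ↔ π ∣ r)
    (hjac : Ideal.span {π} ≤ Ideal.jacobson ⊥)
    (hsep : ∀ f : R, (∀ j : ℕ, π ^ j ∣ f) → f = 0)
    {M : Type*} [AddCommGroup M] [Module R M] [Module.Finite R M]
    {V : Type*} [AddCommGroup V] [Module D V] [Module.Finite D V]
    (q : M →ₛₗ[ρ] V) (hq : Function.Surjective q) (hqk : ∀ x, q x = 0 ↔ ∃ y, x = π • y)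
    (htf : ∀ (j : ℕ) (r : R) (x : M), (∃ y, r • π ^ j • x = π ^ (j + 1) • y) →
      π ∣ r ∨ ∃ y, π ^ j • x = π ^ (j + 1) • y) :
    ∃ (m n : ℕ) (a : Fin n → ℕ), (∀ i, 1 ≤ a i) ∧
      Nonempty (M ≃ₗ[R] ((Fin m → R) × ((i : Fin n) → R ⧸ Ideal.span {π ^ a i}))) := by
  classical
  -- the kernels of `V → gr^j`
  let K : ℕ → Submodule D V := fun j =>
    { carrier := {v | ∃ x, q x = v ∧ ∃ y, π ^ j • x = π ^ (j + 1) • y}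
      add_mem' := by
        rintro _ _ ⟨x, rfl, y, hy⟩ ⟨x', rfl, y', hy'⟩
        exact ⟨x + x', map_add _ _ _, y + y', by rw [smul_add, smul_add, hy, hy']⟩
      zero_mem' := ⟨0, map_zero _, 0, by simp⟩
      smul_mem' := by
        rintro d _ ⟨x, rfl, y, hy⟩
        obtain ⟨r, rfl⟩ := hρ d
        exact ⟨r • x, map_smulₛₗ _ _ _, r • y, by
          rw [smul_comm, hy, smul_comm]⟩ }
  have hKmem : ∀ j x, q x ∈ K j ↔ ∃ y, π ^ j • x = π ^ (j + 1) • y := by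
    intro j x
    constructor
    · rintro ⟨x', hx', y, hy⟩
      obtain ⟨z, hz⟩ := (hqk (x - x')).1 (by rw [map_sub, hx', sub_self])
      refine ⟨y + z, ?_⟩
      rw [← sub_add_cancel x x', smul_add, hz, hy, smul_add, smul_smul, ← pow_succ, add_comm]
    · rintro ⟨y, hy⟩
      exact ⟨x, rfl, y, hy⟩
  have hKmono : Monotone K := by
    refine monotone_nat_of_le_succ fun j => ?_
    rintro _ ⟨x, rfl, y, hy⟩
    refine ⟨x, rfl, y, ?_⟩
    rw [pow_succ', mul_smul, hy, smul_smul, ← pow_succ']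
  have hK0 : K 0 = ⊥ := by
    rw [eq_bot_iff]
    rintro _ ⟨x, rfl, y, hy⟩
    exact (hqk x).2 ⟨y, by simpa using hy⟩
  have hKtf : ∀ j (d : D) v, d • v ∈ K j → d = 0 ∨ v ∈ K j := by
    intro j d v h
    obtain ⟨r, rfl⟩ := hρ d
    obtain ⟨x, rfl⟩ := hq v
    rw [← map_smulₛₗ, hKmem] at h
    obtain ⟨y, hy⟩ := h
    rcases htf j r x ⟨y, by rw [smul_comm, hy]⟩ with h | h
    · exact Or.inl ((hρk r).2 h)
    · exact Or.inr ((hKmem j x).2 h)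
  obtain ⟨N, hN⟩ := monotone_stabilizes_iff_noetherian.2
    (inferInstance : IsNoetherian D V) ⟨K, hKmono⟩
  replace hN : ∀ j, K j = K (min j N) := by
    intro j
    rcases le_total j N with h | h
    · rw [min_eq_left h]
    · rw [min_eq_right h]; exact (hN j h).symm
  obtain ⟨ι, _, b, a, hli, ha, hKa⟩ := pelem_flag (fun j => if j ≤ N then K j else ⊤)
    (by
      intro i j hij
      dsimp only
      split_ifs with h1 h2 h2
      · exact hKmono hij
      · exact le_top
      · omega
      · exact le_top)
    (by simpa using hK0)
    (by
      intro j d v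
      split_ifs with h
      · exact hKtf j d v
      · intro _; exact Or.inr trivial) (N + 1)
  have hspan : ⊤ ≤ Submodule.span D (Set.range b) := by
    have := hKa (N + 1) le_rfl
    rw [if_neg (by omega)] at this
    rw [this]
    exact Submodule.span_mono (Set.image_subset_range _ _)
  replace hKa : ∀ j ≤ N, K j = Submodule.span D (b '' {i | a i ≤ j}) := by
    intro j hj
    rw [← hKa j (by omega), if_pos hj]
  let B := Module.Basis.mk hli hspan
  have hB : ⇑B = b := Module.Basis.coe_mk hli hspan
  -- lift the basis
  have hlift : ∀ i, ∃ x : M, q x = b i ∧ (a i ≤ N → π ^ a i • x = 0) := by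
    intro i
    by_cases hi : a i ≤ N
    · have : b i ∈ K (a i) := by
        rw [hKa _ hi]
        exact Submodule.subset_span ⟨i, le_refl (a i), rfl⟩
      obtain ⟨x, hx, y, hy⟩ := this
      refine ⟨x - π • y, ?_, fun _ => ?_⟩
      · rw [map_sub, hx, (hqk (π • y)).2 ⟨y, rfl⟩, sub_zero]
      · rw [smul_sub, hy, smul_smul, ← pow_succ, sub_self]
    · obtain ⟨x, hx⟩ := hq (b i)
      exact ⟨x, hx, fun h => absurd h hi⟩
  choose x hx hxa using hlift
  have hpos : ∀ i, 1 ≤ a i := by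
    intro i
    by_contra h
    have h0 : a i = 0 := by omega
    have h1 := hxa i (by omega)
    rw [h0, pow_zero, one_smul] at h1
    have := hx i
    rw [h1, map_zero] at this
    exact hli.ne_zero i this.symm
  have hgen : ∀ z : M, ∃ c : ι → R, ∑ i, c i • x i = z := by
    have h1 : (⊤ : Submodule R M) ≤ Submodule.span R (Set.range x) := by
      refine Submodule.le_of_le_smul_of_le_jacobson_bot Module.Finite.fg_top hjac ?_
      intro z _
      have hz : q z ∈ Submodule.span D (Set.range b) := hspan trivial
      obtain ⟨w, hw⟩ := (Submodule.mem_span_range_iff_exists_fun D).1 hz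
      choose c hc using fun i => hρ (w i)
      have h2 : q (z - ∑ i, c i • x i) = 0 := by
        rw [map_sub, map_sum, ← hw]
        simp [map_smulₛₗ, hc, hx]
      obtain ⟨y, hy⟩ := (hqk _).1 h2
      rw [← sub_add_cancel z (∑ i, c i • x i), hy]
      rw [add_comm]
      exact Submodule.add_mem_sup
        (sum_mem fun i _ => Submodule.smul_mem _ _ (Submodule.subset_span ⟨i, rfl⟩))
        (Submodule.smul_mem_smul (Ideal.mem_span_singleton_self π) Submodule.mem_top)
    intro z
    exact (Submodule.mem_span_range_iff_exists_fun R).1 (h1 (Submodule.mem_top (x := z)))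
  have hrel : ∀ c : ι → R, ∑ i, c i • x i = 0 → ∀ j i,
      π ^ j ∣ c i ∨ (a i ≤ N ∧ a i ≤ j ∧ π ^ a i ∣ c i) := by
    intro c hc j
    induction j with
    | zero => intro i; left; simp
    | succ j ih =>
      have hd : ∀ i, ∃ d, c i • x i = π ^ j • d • x i ∧ (a i ≤ N → a i ≤ j → d = 0) ∧
          (¬ (a i ≤ N ∧ a i ≤ j) → c i = π ^ j * d) := by
        intro i
        by_cases h : a i ≤ N ∧ a i ≤ j
        · refine ⟨0, ?_, fun _ _ => rfl, fun h' => absurd h h'⟩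
          have : π ^ a i ∣ c i := by
            rcases ih i with h' | h'
            · exact (pow_dvd_pow _ h.2).trans h'
            · exact h'.2.2
          obtain ⟨e, he⟩ := this
          rw [he, mul_comm, mul_smul, hxa i h.1]
          simp
        · rcases ih i with ⟨d, hd⟩ | h'
          · exact ⟨d, by rw [hd, mul_smul], fun h1 h2 => absurd ⟨h1, h2⟩ h, fun _ => hd⟩
          · exact absurd ⟨h'.1, h'.2.1⟩ h
      choose d hd1 hd2 hd3 using hd
      have h1 : π ^ j • ∑ i, d i • x i = 0 := by
        rw [Finset.smul_sum, ← hc]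
        exact Finset.sum_congr rfl fun i _ => (hd1 i).symm
      have h2 : q (∑ i, d i • x i) ∈ K j := (hKmem _ _).2 ⟨0, by rw [h1, smul_zero]⟩
      rw [hN, hKa _ (min_le_right _ _), ← hB, B.mem_span_image] at h2
      have h3 : ∀ i, B.repr (q (∑ i, d i • x i)) i = ρ (d i) := by
        have : q (∑ i, d i • x i) = ∑ i, ρ (d i) • B i := by
          rw [map_sum]
          simp [map_smulₛₗ, hx, hB]
        intro i
        rw [this, B.repr_sum_self]
      have h4 : ∀ i, π ∣ d i := by
        intro i
        by_cases h : a i ≤ N ∧ a i ≤ j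
        · rw [hd2 i h.1 h.2]; exact dvd_zero _
        · rw [← hρk, ← h3]
          by_contra h5
          have h6 := h2 (Finsupp.mem_support_iff.2 h5)
          have h7 : a i ≤ min j N := h6
          exact h ⟨h7.trans (min_le_right _ _), h7.trans (min_le_left _ _)⟩
      intro i
      by_cases h : a i ≤ N ∧ a i ≤ j
      · right
        refine ⟨h.1, by omega, ?_⟩
        rcases ih i with h' | h'
        · exact (pow_dvd_pow _ h.2).trans h'
        · exact h'.2.2
      · left
        rw [hd3 i h, pow_succ]
        exact mul_dvd_mul_left _ (h4 i)
  have hrel1 : ∀ c : ι → R, ∑ i, c i • x i = 0 → ∀ i, a i ≤ N → π ^ a i ∣ c i := by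
    intro c hc i _
    rcases hrel c hc (a i) i with h | h
    · exact h
    · exact h.2.2
  have hrel2 : ∀ c : ι → R, ∑ i, c i • x i = 0 → ∀ i, ¬ a i ≤ N → c i = 0 := by
    intro c hc i hi
    refine hsep _ fun j => ?_
    rcases hrel c hc j i with h | h
    · exact h
    · exact absurd h.1 hi
  -- assemble
  let e₁ := Fintype.equivFin {i // ¬ a i ≤ N}
  let e₂ := Fintype.equivFin {i // a i ≤ N}
  let a' : Fin (Fintype.card {i // a i ≤ N}) → ℕ := fun i => a (e₂.symm i)
  let f₁ : (Fin (Fintype.card {i // ¬ a i ≤ N}) → R) →ₗ[R] M :=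
    Fintype.linearCombination R (fun i => x (e₁.symm i))
  let f₂ : ((i : Fin (Fintype.card {i // a i ≤ N})) → R ⧸ Ideal.span {π ^ a' i}) →ₗ[R] M :=
    LinearMap.lsum R (fun i => R ⧸ Ideal.span {π ^ a' i}) R (fun i =>
      Submodule.liftQ (Ideal.span {π ^ a' i}) (LinearMap.toSpanSingleton R M (x (e₂.symm i))) (by
        rw [Ideal.span_singleton_le_iff_mem, LinearMap.mem_ker, LinearMap.toSpanSingleton_apply]
        exact hxa _ (e₂.symm i).2))
  have hf : ∀ c : ι → R, f₁ (fun i => c (e₁.symm i)) +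
      f₂ (fun i => Ideal.Quotient.mk _ (c (e₂.symm i))) = ∑ i, c i • x i := by
    intro c
    have h1 : f₁ (fun i => c (e₁.symm i)) = ∑ i : {i // ¬ a i ≤ N}, c i • x i := by
      rw [Fintype.linearCombination_apply]
      exact Equiv.sum_comp e₁.symm (fun i : {i // ¬ a i ≤ N} => c i • x i)
    have h2 : f₂ (fun i => Ideal.Quotient.mk _ (c (e₂.symm i))) =
        ∑ i : {i // a i ≤ N}, c i • x i := by
      simp only [f₂]
      rw [LinearMap.lsum_apply, LinearMap.sum_apply,
        ← Equiv.sum_comp e₂.symm (fun i : {i // a i ≤ N} => c i • x i)]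
      rfl
    rw [h1, h2, add_comm]
    exact Fintype.sum_subtype_add_sum_subtype (fun i => a i ≤ N) (fun i => c i • x i)
  have hrep : ∀ w : (Fin (Fintype.card {i // ¬ a i ≤ N}) → R) ×
      ((i : Fin (Fintype.card {i // a i ≤ N})) → R ⧸ Ideal.span {π ^ a' i}),
      ∃ c : ι → R, w = (fun i => c (e₁.symm i), fun i => Ideal.Quotient.mk _ (c (e₂.symm i))) := by
    rintro ⟨u, v⟩
    choose v' hv' using fun i => Ideal.Quotient.mk_surjective (v i)
    refine ⟨fun i => if h : a i ≤ N then v' (e₂ ⟨i, h⟩) else u (e₁ ⟨i, h⟩), ?_⟩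
    refine Prod.ext ?_ ?_
    · funext i
      dsimp only
      rw [dif_neg (e₁.symm i).2]
      simp
    · funext i
      dsimp only
      rw [dif_pos (e₂.symm i).2, ← hv']
      simp
  refine ⟨_, _, a', fun i => hpos _, ⟨(LinearEquiv.ofBijective (f₁.coprod f₂) ⟨?_, ?_⟩).symm⟩⟩
  · rw [injective_iff_map_eq_zero]
    intro w hw
    obtain ⟨c, rfl⟩ := hrep w
    rw [LinearMap.coprod_apply, hf] at hw
    refine Prod.ext ?_ ?_
    · funext i
      exact hrel2 c hw _ (e₁.symm i).2
    · funext i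
      exact Ideal.Quotient.eq_zero_iff_mem.2
        (Ideal.mem_span_singleton.2 (hrel1 c hw _ (e₂.symm i).2))
  · intro z
    obtain ⟨c, hc⟩ := hgen z
    exact ⟨(fun i => c (e₁.symm i), fun i => Ideal.Quotient.mk _ (c (e₂.symm i))), by
      rw [LinearMap.coprod_apply, hf, hc]⟩

variable {p : ℕ} [Fact p.Prime] {k : Type*} [Field k] [CharP k p] [PerfectField k]

local notation "𝕊" => PowerSeries (WittVector p k)

theorem pelem_crit
    (M : Type*) [AddCommGroup M] [Module 𝕊 M] [Module.Finite 𝕊 M]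
    (hfree : ∀ j : ℕ, ∃ r : ℕ, Nonempty
      ((↥(Ideal.span {(p : 𝕊) ^ j} • (⊤ : Submodule 𝕊 M)) ⧸
          (Ideal.span {(p : 𝕊) ^ (j + 1)} • (⊤ : Submodule 𝕊 M)).comap
            (Ideal.span {(p : 𝕊) ^ j} • (⊤ : Submodule 𝕊 M)).subtype)
        ≃ₗ[𝕊] (Fin r → 𝕊 ⧸ Ideal.span {(p : 𝕊)}))) :
    ∃ (m n : ℕ) (a : Fin n → ℕ), (∀ i, 1 ≤ a i) ∧
      Nonempty (M ≃ₗ[𝕊]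
        ((Fin m → 𝕊) × ((i : Fin n) → 𝕊 ⧸ Ideal.span {(p : 𝕊) ^ a i}))) := by
  have := pelem_dom (p := p) (k := k)
  have := pelem_pid (p := p) (k := k)
  have hmem : ∀ (s : 𝕊) (x : M), x ∈ Ideal.span {s} • (⊤ : Submodule 𝕊 M) ↔ ∃ y, x = s • y := by
    intro s x
    rw [Submodule.ideal_span_singleton_smul, Submodule.mem_smul_pointwise_iff_exists]
    simp [eq_comm]
  let V := M ⧸ (Ideal.span {(p : 𝕊)} • (⊤ : Submodule 𝕊 M))
  have : Module.Finite (𝕊 ⧸ Ideal.span {(p : 𝕊)}) V :=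
    Module.Finite.of_restrictScalars_finite 𝕊 _ _
  let q : M →ₛₗ[Ideal.Quotient.mk (Ideal.span {(p : 𝕊)})] V :=
    { toFun := Submodule.Quotient.mk
      map_add' := fun _ _ => rfl
      map_smul' := fun _ _ => rfl }
  refine pelem_abs (p : 𝕊) (Ideal.Quotient.mk (Ideal.span {(p : 𝕊)}))
    Ideal.Quotient.mk_surjective
    (fun r => by rw [Ideal.Quotient.eq_zero_iff_mem, Ideal.mem_span_singleton])
    pelem_jac pelem_hausdorff q (Submodule.Quotient.mk_surjective _)
    (fun x => (Submodule.Quotient.mk_eq_zero _).trans (hmem _ _)) ?_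
  rintro j r x ⟨y, hy⟩
  obtain ⟨n, ⟨e⟩⟩ := hfree j
  by_contra! hcon
  obtain ⟨h1, h2⟩ := hcon
  let z : ↥(Ideal.span {(p : 𝕊) ^ j} • (⊤ : Submodule 𝕊 M)) :=
    ⟨(p : 𝕊) ^ j • x, (hmem _ _).2 ⟨x, rfl⟩⟩
  have h3 : r • e (Submodule.Quotient.mk z) = 0 := by
    rw [← map_smul, ← Submodule.Quotient.mk_smul, map_eq_zero_iff e e.injective,
      Submodule.Quotient.mk_eq_zero]
    exact (hmem _ _).2 ⟨y, hy⟩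
  have h4 : e (Submodule.Quotient.mk z) = 0 := by
    funext i
    have h5 := congrFun h3 i
    obtain ⟨t, ht⟩ := Ideal.Quotient.mk_surjective (e (Submodule.Quotient.mk z) i)
    rw [Pi.smul_apply, ← ht] at h5
    have h6 : Ideal.Quotient.mk (Ideal.span {(p : 𝕊)}) r * Ideal.Quotient.mk _ t = 0 := h5
    rcases mul_eq_zero.1 h6 with h | h
    · exact absurd (Ideal.mem_span_singleton.1 (Ideal.Quotient.eq_zero_iff_mem.1 h)) h1
    · rw [← ht, h]; rfl
  rw [map_eq_zero_iff e e.injective, Submodule.Quotient.mk_eq_zero] at h4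
  obtain ⟨y', hy'⟩ := (hmem _ _).1 h4
  exact h2 y' hy'
end

section
/- Let T be a finitely generated 𝔖-module killed by p^N for some integer N ≥ 1, and suppose that for every integer j ≥ 0 the quotient gr_p^j T = p^j T / p^{j+1} T is a finite free module over 𝔖/(p) ≅ k[[z]]. Then there exist integers t ≥ 0 and a_1, …, a_t ≥ 1 such that T is isomorphic as an 𝔖-module to ⊕_{i=1}^{t} 𝔖/(p^{a_i}). -/
/-!
Context: `p` a prime, `k` a perfect field of characteristic `p`, `W(k)` the Witt vectors,
`𝕊 = W(k)[[z]]`, and `gr_p^j T := p^j T / p^{j+1} T`, a module over `𝕊/(p) ≅ k[[z]]`.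

STATEMENT 1: if `T` is a finitely generated `𝕊`-module killed by `p^N` for some `N ≥ 1`,
and every `gr_p^j T` is finite free over `𝕊/(p)`, then `T ≅ ⨁_{i=1}^t 𝕊/(p^{a_i})` with
`a_i ≥ 1`.
-/

theorem aux_gr {R : Type*} [CommRing R] (π : R) (T : Type*) [AddCommGroup T] [Module R T]
    (j r : ℕ)
    (e : (↥(Ideal.span {π ^ j} • (⊤ : Submodule R T)) ⧸
          (Ideal.span {π ^ (j + 1)} • (⊤ : Submodule R T)).comap
            (Ideal.span {π ^ j} • (⊤ : Submodule R T)).subtype)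
        ≃ₗ[R] (Fin r → R ⧸ Ideal.span {π})) :
    ∃ g : T →ₗ[R] (Fin r → R ⧸ Ideal.span {π}),
      ∀ y, g y = 0 ↔ ∃ y', π ^ j • y = π ^ (j + 1) • y' := by
  let m : T →ₗ[R] ↥(Ideal.span {π ^ j} • (⊤ : Submodule R T)) :=
    (LinearMap.lsmul R T (π ^ j)).codRestrict _ (fun y =>
      Submodule.smul_mem_smul (Ideal.mem_span_singleton_self _) Submodule.mem_top)
  refine ⟨e.toLinearMap ∘ₗ Submodule.mkQ _ ∘ₗ m, fun y => ?_⟩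
  simp only [LinearMap.comp_apply, LinearEquiv.coe_coe, LinearEquiv.map_eq_zero_iff,
    Submodule.mkQ_apply, Submodule.Quotient.mk_eq_zero, Submodule.mem_comap]
  rw [Submodule.ideal_span_singleton_smul, Submodule.mem_smul_pointwise_iff_exists]
  constructor
  · rintro ⟨b, -, hb⟩
    exact ⟨b, hb.symm⟩
  · rintro ⟨b, hb⟩
    exact ⟨b, Submodule.mem_top, hb.symm⟩

theorem aux_step {R : Type*} [CommRing R] (π : R)
    [IsDomain (R ⧸ Ideal.span {π})] [IsPrincipalIdealRing (R ⧸ Ideal.span {π})]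
    (T : Type*) [AddCommGroup T] [Module R T] (j r : ℕ)
    (g : T →ₗ[R] (Fin r → R ⧸ Ideal.span {π}))
    (hg : ∀ y, g y = 0 ↔ ∃ y', π ^ j • y = π ^ (j + 1) • y')
    (h : ∃ (t : ℕ) (a : Fin t → ℕ) (x : Fin t → T), (∀ i, 1 ≤ a i) ∧
      (∀ i, π ^ (j + 1 + a i) • x i = 0) ∧
      (∀ y : T, ∃ c : Fin t → R, π ^ (j + 1) • y = π ^ (j + 1) • ∑ i, c i • x i) ∧
      (∀ c : Fin t → R, π ^ (j + 1) • ∑ i, c i • x i = 0 → ∀ i, π ^ a i ∣ c i)) :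
    ∃ (t : ℕ) (a : Fin t → ℕ) (x : Fin t → T), (∀ i, 1 ≤ a i) ∧
      (∀ i, π ^ (j + a i) • x i = 0) ∧
      (∀ y : T, ∃ c : Fin t → R, π ^ j • y = π ^ j • ∑ i, c i • x i) ∧
      (∀ c : Fin t → R, π ^ j • ∑ i, c i • x i = 0 → ∀ i, π ^ a i ∣ c i) := by
  obtain ⟨t, a, x, ha, hx, hgen, hind⟩ := h
  let K : Submodule (R ⧸ Ideal.span {π}) (Fin r → R ⧸ Ideal.span {π}) :=
    { carrier := {v | ∃ y : T, g y = v ∧ π ^ (j + 1) • y = 0}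
      add_mem' := by
        rintro _ _ ⟨y, rfl, hy⟩ ⟨z, rfl, hz⟩
        exact ⟨y + z, map_add _ _ _, by rw [smul_add, hy, hz, add_zero]⟩
      zero_mem' := ⟨0, map_zero _, smul_zero _⟩
      smul_mem' := by
        rintro s _ ⟨y, rfl, hy⟩
        obtain ⟨s, rfl⟩ := Ideal.Quotient.mk_surjective s
        exact ⟨s • y, by rw [map_smul]; rfl, by rw [smul_comm, hy, smul_zero]⟩ }
  obtain ⟨n, ⟨b⟩⟩ := Submodule.nonempty_basis_of_pid
    (Pi.basisFun (R ⧸ Ideal.span {π}) (Fin r)) K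
  have hw : ∀ l, ∃ y : T, g y = (b l : Fin r → R ⧸ Ideal.span {π}) ∧ π ^ (j + 1) • y = 0 :=
    fun l => (b l).2
  choose w hw1 hw2 using hw
  have hgw : ∀ d : Fin n → R, g (∑ l, d l • w l) =
      ((∑ l, Ideal.Quotient.mk (Ideal.span {π}) (d l) • b l : K) :
        Fin r → R ⧸ Ideal.span {π}) := by
    intro d
    rw [map_sum, Submodule.coe_sum]
    refine Finset.sum_congr rfl fun l _ => ?_
    rw [map_smul, hw1]; rfl
  refine ⟨t + n, Fin.append (fun i => a i + 1) (fun _ => 1), Fin.append x w, ?_, ?_, ?_, ?_⟩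
  · intro i
    refine Fin.addCases (fun i => ?_) (fun i => ?_) i <;> simp
  · intro i
    refine Fin.addCases (fun i => ?_) (fun i => ?_) i
    · have := hx i
      simp only [Fin.append_left]
      rw [← this]; congr 2; omega
    · simpa using hw2 i
  · intro y
    obtain ⟨c, hc⟩ := hgen y
    have h1 : π ^ (j + 1) • (y - ∑ i, c i • x i) = 0 := by rw [smul_sub, hc, sub_self]
    let v : K := ⟨g (y - ∑ i, c i • x i), ⟨_, rfl, h1⟩⟩
    choose d hd using fun l => Ideal.Quotient.mk_surjective (b.repr v l)
    have h2 : g (y - ∑ i, c i • x i - ∑ l, d l • w l) = 0 := by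
      rw [map_sub, hgw]
      simp only [hd]
      rw [b.sum_repr v, sub_self]
    obtain ⟨y', hy'⟩ := (hg _).1 h2
    obtain ⟨c', hc'⟩ := hgen y'
    refine ⟨Fin.append (fun i => c i + π * c' i) d, ?_⟩
    rw [Fin.sum_univ_add]
    simp only [Fin.append_left, Fin.append_right, add_smul, Finset.sum_add_distrib, mul_smul,
      ← Finset.smul_sum]
    rw [hc', pow_succ, mul_smul] at hy'
    rw [smul_add, smul_add, ← hy', smul_sub, smul_sub]
    abel
  · intro c hc
    rw [Fin.sum_univ_add] at hc
    simp only [Fin.append_left, Fin.append_right] at hc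
    set c1 : Fin t → R := fun i => c (Fin.castAdd n i) with hc1
    set d : Fin n → R := fun i => c (Fin.natAdd t i) with hd
    change π ^ j • (∑ i, c1 i • x i + ∑ i, d i • w i) = 0 at hc
    have hwk : π ^ (j + 1) • ∑ i, d i • w i = 0 := by
      rw [Finset.smul_sum]
      refine Finset.sum_eq_zero fun l _ => ?_
      rw [smul_comm, hw2, smul_zero]
    have h1 : π ^ (j + 1) • ∑ i, c1 i • x i = 0 := by
      have : π ^ (j + 1) • (∑ i, c1 i • x i + ∑ i, d i • w i) = 0 := by
        rw [pow_succ', mul_smul, hc, smul_zero]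
      rwa [smul_add, hwk, add_zero] at this
    have h2 : ∀ i, π ∣ c1 i := fun i =>
      (dvd_pow_self π (Nat.one_le_iff_ne_zero.1 (ha i))).trans (hind c1 h1 i)
    choose c' hc' using h2
    have h3 : ∑ i, c1 i • x i = π • ∑ i, c' i • x i := by
      rw [Finset.smul_sum]
      exact Finset.sum_congr rfl fun i _ => by rw [hc', mul_smul]
    have h4 : g (∑ l, d l • w l) = 0 := by
      refine (hg _).2 ⟨-∑ i, c' i • x i, ?_⟩
      rw [h3, smul_add, ← mul_smul, ← pow_succ] at hc
      rw [smul_neg]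
      exact eq_neg_of_add_eq_zero_right hc
    have h5 : ∀ l, π ∣ d l := by
      rw [hgw, ZeroMemClass.coe_eq_zero] at h4
      intro l
      have := Fintype.linearIndependent_iff.1 b.linearIndependent _ h4 l
      rwa [Ideal.Quotient.eq_zero_iff_mem, Ideal.mem_span_singleton] at this
    have h6 : π ^ j • ∑ l, d l • w l = 0 := by
      rw [Finset.smul_sum]
      refine Finset.sum_eq_zero fun l _ => ?_
      obtain ⟨q, hq⟩ := h5 l
      rw [hq, ← mul_smul, ← mul_assoc, ← pow_succ, mul_comm, mul_smul, hw2, smul_zero]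
    have h7 : π ^ (j + 1) • ∑ i, c' i • x i = 0 := by
      rwa [smul_add, h6, add_zero, h3, ← mul_smul, ← pow_succ] at hc
    have h8 := hind c' h7
    intro i
    refine Fin.addCases (fun i => ?_) (fun i => ?_) i
    · simp only [Fin.append_left]
      change _ ∣ c1 i
      rw [hc', pow_succ']
      exact mul_dvd_mul_left _ (h8 i)
    · simpa using h5 i

theorem aux_main {R : Type*} [CommRing R] (π : R)
    [IsDomain (R ⧸ Ideal.span {π})] [IsPrincipalIdealRing (R ⧸ Ideal.span {π})]
    (T : Type*) [AddCommGroup T] [Module R T]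
    (N : ℕ) (hkill : ∀ x : T, π ^ N • x = 0)
    (hfree : ∀ j : ℕ, ∃ r : ℕ, Nonempty
      ((↥(Ideal.span {π ^ j} • (⊤ : Submodule R T)) ⧸
          (Ideal.span {π ^ (j + 1)} • (⊤ : Submodule R T)).comap
            (Ideal.span {π ^ j} • (⊤ : Submodule R T)).subtype)
        ≃ₗ[R] (Fin r → R ⧸ Ideal.span {π}))) :
    ∃ (t : ℕ) (a : Fin t → ℕ), (∀ i, 1 ≤ a i) ∧
      Nonempty (T ≃ₗ[R] ((i : Fin t) → R ⧸ Ideal.span {π ^ a i})) := by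
  have key : ∀ j ≤ N, ∃ (t : ℕ) (a : Fin t → ℕ) (x : Fin t → T), (∀ i, 1 ≤ a i) ∧
      (∀ i, π ^ (j + a i) • x i = 0) ∧
      (∀ y : T, ∃ c : Fin t → R, π ^ j • y = π ^ j • ∑ i, c i • x i) ∧
      (∀ c : Fin t → R, π ^ j • ∑ i, c i • x i = 0 → ∀ i, π ^ a i ∣ c i) := by
    intro j hj
    induction hj using Nat.decreasingInduction with
    | self =>
      exact ⟨0, Fin.elim0, Fin.elim0, fun i => i.elim0, fun i => i.elim0,
        fun y => ⟨Fin.elim0, by rw [hkill, hkill]⟩, fun c _ i => i.elim0⟩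
    | of_succ j _ ih =>
      obtain ⟨r, ⟨e⟩⟩ := hfree j
      obtain ⟨g, hg⟩ := aux_gr π T j r e
      exact aux_step π T j r g hg ih
  obtain ⟨t, a, x, ha, hx, hgen, hind⟩ := key 0 (Nat.zero_le _)
  simp only [pow_zero, one_smul, zero_add] at hx hgen hind
  refine ⟨t, a, ha, ⟨?_⟩⟩
  let f : (Fin t → R) →ₗ[R] T := Fintype.linearCombination R x
  have hf : Function.Surjective f := fun y => by
    obtain ⟨c, hc⟩ := hgen y
    exact ⟨c, by rw [Fintype.linearCombination_apply, hc]⟩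
  have hk : LinearMap.ker f =
      Submodule.pi Set.univ (fun i => (Ideal.span {π ^ a i} : Submodule R R)) := by
    ext c
    simp only [LinearMap.mem_ker, Submodule.mem_pi, Set.mem_univ, true_imp_iff, forall_true_left]
    simp only [f, Fintype.linearCombination_apply, Ideal.mem_span_singleton]
    refine ⟨hind c, fun h => Finset.sum_eq_zero fun i _ => ?_⟩
    obtain ⟨q, hq⟩ := h i
    rw [hq, mul_comm, mul_smul, hx, smul_zero]
  exact (f.quotKerEquivOfSurjective hf).symm.trans
    ((Submodule.quotEquivOfEq _ _ hk).trans (Submodule.quotientPi _))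

theorem aux_ker (p : ℕ) [Fact p.Prime] (k : Type*) [Field k] [CharP k p] [PerfectField k] :
    RingHom.ker (PowerSeries.map (WittVector.constantCoeff (p := p) (R := k))) =
      Ideal.span {(p : PowerSeries (WittVector p k))} := by
  haveI : PerfectRing k p := PerfectField.toPerfectRing p
  ext f
  rw [RingHom.mem_ker, Ideal.mem_span_singleton]
  constructor
  · intro h
    have h1 : ∀ n, ∃ q : WittVector p k, PowerSeries.coeff n f = p * q := by
      intro n
      have h2 : (PowerSeries.coeff n f).coeff 0 = 0 := by
        have := congrArg (PowerSeries.coeff n) h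
        simpa using this
      have h3 : PowerSeries.coeff n f ∈ Ideal.span {(p : WittVector p k)} :=
        (WittVector.mem_span_p_iff_coeff_zero_eq_zero _).2 h2
      exact Ideal.mem_span_singleton.1 h3
    choose q hq using h1
    refine ⟨PowerSeries.mk q, ?_⟩
    ext1 n
    rw [hq, ← map_natCast (PowerSeries.C (R := WittVector p k)), PowerSeries.coeff_C_mul,
      PowerSeries.coeff_mk]
  · rintro ⟨q, rfl⟩
    rw [map_mul, map_natCast, ← map_natCast (PowerSeries.C (R := k)), CharP.cast_eq_zero,
      map_zero, zero_mul]

variable {p : ℕ} [Fact p.Prime] {k : Type*} [Field k] [CharP k p] [PerfectField k]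

local notation "𝕊" => PowerSeries (WittVector p k)

theorem torsion_pelem_crit
    (T : Type*) [AddCommGroup T] [Module 𝕊 T] [Module.Finite 𝕊 T]
    (N : ℕ) (hN : 1 ≤ N) (hkill : ∀ x : T, (p : 𝕊) ^ N • x = 0)
    (hfree : ∀ j : ℕ, ∃ r : ℕ, Nonempty
      ((↥(Ideal.span {(p : 𝕊) ^ j} • (⊤ : Submodule 𝕊 T)) ⧸
          (Ideal.span {(p : 𝕊) ^ (j + 1)} • (⊤ : Submodule 𝕊 T)).comap
            (Ideal.span {(p : 𝕊) ^ j} • (⊤ : Submodule 𝕊 T)).subtype)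
        ≃ₗ[𝕊] (Fin r → 𝕊 ⧸ Ideal.span {(p : 𝕊)}))) :
    ∃ (t : ℕ) (a : Fin t → ℕ), (∀ i, 1 ≤ a i) ∧
      Nonempty (T ≃ₗ[𝕊] ((i : Fin t) → 𝕊 ⧸ Ideal.span {(p : 𝕊) ^ a i})) := by
  have hs : Function.Surjective (PowerSeries.map (WittVector.constantCoeff (p := p) (R := k))) :=
    PowerSeries.map_surjective _ (WittVector.constantCoeff_surjective p)
  let e : (𝕊 ⧸ Ideal.span {(p : 𝕊)}) ≃+* PowerSeries k :=
    (Ideal.quotEquivOfEq (aux_ker p k).symm).trans (RingHom.quotientKerEquivOfSurjective hs)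
  haveI : IsDomain (𝕊 ⧸ Ideal.span {(p : 𝕊)}) := e.toMulEquiv.isDomain (PowerSeries k)
  haveI : IsPrincipalIdealRing (𝕊 ⧸ Ideal.span {(p : 𝕊)}) :=
    IsPrincipalIdealRing.of_surjective e.symm.toRingHom e.symm.surjective
  exact aux_main (p : 𝕊) T N hkill hfree
end

section
/- Let W be a commutative 𝔖-algebra in which p is a non-zero-divisor and such that for every integer n ≥ 1 the induced ring map 𝔖/(p^n) → W/(p^n) is injective. Let 0 → A → B → C → 0 be a short exact sequence of 𝔖-modules whose underlying 𝔖-modules are of the form A ≅ 𝔖^{⊕a} ⊕ ⊕_i 𝔖/(p^{a_i}), B ≅ 𝔖^{⊕b} ⊕ ⊕_i 𝔖/(p^{b_i}), and C ≅ 𝔖^{⊕c} ⊕ ⊕_i 𝔖/(p^{c_i}) for nonnegative integers a, b, c and finite families of positive integers (a_i), (b_i), (c_i). If the induced sequence of W-modules 0 → A ⊗_𝔖 W → B ⊗_𝔖 W → C ⊗_𝔖 W → 0 is split exact, then the induced sequence 0 → A_tors → B_tors → C_tors → 0 is a split exact sequence of 𝔖-modules. -/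
/-!
Context: `p` a prime, `k` a perfect field of characteristic `p`, `𝕊 = W(k)[[z]]`.
For an `𝕊`-module `M`, `M_tors` denotes the `p`-power torsion submodule.
`W` is a commutative `𝕊`-algebra in which `p` is a non-zero-divisor and such that
`𝕊/(p^n) → W/(p^n)` is injective for all `n ≥ 1`.

STATEMENT 2: given a short exact sequence `0 → A → B → C → 0` of `𝕊`-modules whose terms
are of the form `𝕊^{⊕a} ⊕ ⨁ᵢ 𝕊/(p^{aᵢ})` (resp. for `b`, `c`), if the base-changed
sequence `0 → A ⊗ W → B ⊗ W → C ⊗ W → 0` is split exact, then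
`0 → A_tors → B_tors → C_tors → 0` is a split exact sequence of `𝕊`-modules.
-/

open TensorProduct

/-- The `p`-power torsion submodule of an `R`-module `M`. -/
def pPowerTorsion (R : Type*) [CommRing R] (p : R) (M : Type*) [AddCommGroup M]
    [Module R M] : Submodule R M where
  carrier := {x | ∃ n : ℕ, p ^ n • x = 0}
  add_mem' := by
    rintro x y ⟨m, hm⟩ ⟨n, hn⟩
    refine ⟨m + n, ?_⟩
    have hx : p ^ (m + n) • x = 0 := by
      rw [pow_add, mul_comm, mul_smul, hm, smul_zero]
    have hy : p ^ (m + n) • y = 0 := by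
      rw [pow_add, mul_smul, hn, smul_zero]
    rw [smul_add, hx, hy, add_zero]
  zero_mem' := ⟨0, smul_zero _⟩
  smul_mem' := by
    rintro c x ⟨n, hn⟩
    exact ⟨n, by rw [smul_comm, hn, smul_zero]⟩

/-- The map induced on `p`-power torsion submodules by a linear map. -/
def mapPTors {R : Type*} [CommRing R] (p : R) {M N : Type*} [AddCommGroup M]
    [AddCommGroup N] [Module R M] [Module R N] (f : M →ₗ[R] N) :
    pPowerTorsion R p M →ₗ[R] pPowerTorsion R p N :=
  f.restrict fun x hx => by
    obtain ⟨n, hn⟩ := hx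
    exact ⟨n, by rw [← map_smul, hn, map_zero]⟩

theorem aux_pow_dvd {R W : Type*} [CommRing R] [CommRing W] [Algebra R W] (p : R)
    (hinj : ∀ n : ℕ, 1 ≤ n → ∀ x : R,
      algebraMap R W x ∈ Ideal.span {(algebraMap R W p) ^ n} → x ∈ Ideal.span {p ^ n})
    (n : ℕ) (x : R) (h : (algebraMap R W p) ^ n ∣ algebraMap R W x) : p ^ n ∣ x := by
  rcases Nat.eq_zero_or_pos n with rfl | hn
  · simp
  · exact Ideal.mem_span_singleton.1 (hinj n hn x (Ideal.mem_span_singleton.2 h))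

theorem aux_quot {R W : Type*} [CommRing R] [CommRing W] [Algebra R W] (p : R)
    (hinj : ∀ n : ℕ, 1 ≤ n → ∀ x : R,
      algebraMap R W x ∈ Ideal.span {(algebraMap R W p) ^ n} → x ∈ Ideal.span {p ^ n})
    (m n : ℕ) (q : R ⧸ Ideal.span {p ^ m}) (t : W ⊗[R] (R ⧸ Ideal.span {p ^ m}))
    (h : (1 : W) ⊗ₜ[R] q = p ^ n • t) : ∃ q', q = p ^ n • q' := by
  obtain ⟨x, rfl⟩ := Ideal.Quotient.mk_surjective q
  let φ : (R ⧸ Ideal.span {p ^ m}) →ₗ[R] (W ⧸ Ideal.span {(algebraMap R W p) ^ m}) :=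
    Submodule.liftQ _ ((Ideal.Quotient.mkₐ R _).toLinearMap ∘ₗ Algebra.linearMap R W) (by
      rw [Ideal.span, Submodule.span_le]
      rintro y rfl
      simp only [SetLike.mem_coe, LinearMap.mem_ker, LinearMap.comp_apply,
        Algebra.linearMap_apply, AlgHom.toLinearMap_apply, Ideal.Quotient.mkₐ_eq_mk]
      rw [Ideal.Quotient.eq_zero_iff_mem, map_pow]
      exact Ideal.mem_span_singleton_self _)
  have h1 := congrArg (φ.liftBaseChange W) h
  obtain ⟨w, hw⟩ := Ideal.Quotient.mk_surjective (φ.liftBaseChange W t)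
  have h2 : φ (Ideal.Quotient.mk _ x) = Ideal.Quotient.mk _ (algebraMap R W x) := rfl
  rw [← algebraMap_smul W (p ^ n) t, map_smul, LinearMap.liftBaseChange_tmul, one_smul, h2,
    ← hw] at h1
  have h3 : algebraMap R W x - algebraMap R W (p ^ n) * w ∈
      Ideal.span {(algebraMap R W p) ^ m} := by
    rw [← Ideal.Quotient.eq]; exact h1
  rw [Ideal.mem_span_singleton] at h3
  have h4 : (algebraMap R W p) ^ (min n m) ∣ algebraMap R W x := by
    have := dvd_add ((pow_dvd_pow _ (min_le_right n m)).trans h3)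
      (((pow_dvd_pow (algebraMap R W p) (min_le_left n m)).trans
        (by rw [map_pow])).trans (Dvd.intro w rfl :
          algebraMap R W (p ^ n) ∣ algebraMap R W (p ^ n) * w))
    simpa using this
  obtain ⟨y, hy⟩ := aux_pow_dvd p hinj _ x h4
  rcases le_total n m with hnm | hnm
  · rw [min_eq_left hnm] at hy
    exact ⟨Ideal.Quotient.mk _ y, by rw [hy]; rfl⟩
  · rw [min_eq_right hnm] at hy
    refine ⟨0, ?_⟩
    rw [smul_zero, Ideal.Quotient.eq_zero_iff_mem, Ideal.mem_span_singleton]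
    exact ⟨y, hy⟩

theorem aux_pure {R W : Type*} [CommRing R] [CommRing W] [Algebra R W] (p : R)
    (hinj : ∀ n : ℕ, 1 ≤ n → ∀ x : R,
      algebraMap R W x ∈ Ideal.span {(algebraMap R W p) ^ n} → x ∈ Ideal.span {p ^ n})
    {A : Type*} [AddCommGroup A] [Module R A] (a na : ℕ) (as : Fin na → ℕ)
    (e : A ≃ₗ[R] ((Fin a → R) × ((i : Fin na) → R ⧸ Ideal.span {p ^ as i})))
    (n : ℕ) (x : A) (t : W ⊗[R] A) (h : (1 : W) ⊗ₜ[R] x = p ^ n • t) :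
    ∃ x', x = p ^ n • x' := by
  have h1 : ∀ j, ∃ r, (e x).1 j = p ^ n * r := by
    intro j
    let π : A →ₗ[R] R := LinearMap.proj j ∘ₗ LinearMap.fst _ _ _ ∘ₗ e.toLinearMap
    have h1 := congrArg ((Algebra.linearMap R W ∘ₗ π).liftBaseChange W) h
    rw [← algebraMap_smul W (p ^ n) t, map_smul, LinearMap.liftBaseChange_tmul, one_smul,
      map_pow] at h1
    exact aux_pow_dvd p hinj n ((e x).1 j) ⟨_, h1⟩
  have h2 : ∀ i, ∃ r, (e x).2 i = p ^ n • r := by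
    intro i
    let π : A →ₗ[R] (R ⧸ Ideal.span {p ^ as i}) :=
      LinearMap.proj i ∘ₗ LinearMap.snd _ _ _ ∘ₗ e.toLinearMap
    have h1 := congrArg (π.lTensor W) h
    rw [map_smul, LinearMap.lTensor_tmul] at h1
    exact aux_quot p hinj (as i) n _ _ h1
  choose r hr using h1
  choose q hq using h2
  refine ⟨e.symm (r, q), e.injective ?_⟩
  rw [map_smul, e.apply_symm_apply]
  ext i
  · exact hr i
  · exact hq i

theorem aux_lift {R W : Type*} [CommRing R] [CommRing W] [Algebra R W] (p : R)
    (hinj : ∀ n : ℕ, 1 ≤ n → ∀ x : R,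
      algebraMap R W x ∈ Ideal.span {(algebraMap R W p) ^ n} → x ∈ Ideal.span {p ^ n})
    {A B C : Type*} [AddCommGroup A] [Module R A] [AddCommGroup B] [Module R B]
    [AddCommGroup C] [Module R C] (a na : ℕ) (as : Fin na → ℕ)
    (e : A ≃ₗ[R] ((Fin a → R) × ((i : Fin na) → R ⧸ Ideal.span {p ^ as i})))
    (f : A →ₗ[R] B) (g : B →ₗ[R] C)
    (hfg : Function.Exact f g) (hg : Function.Surjective g)
    (hWinj : Function.Injective (f.baseChange W))
    (hWexact : Function.Exact (f.baseChange W) (g.baseChange W))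
    (s : W ⊗[R] C →ₗ[W] W ⊗[R] B) (hs : (g.baseChange W).comp s = LinearMap.id)
    (n : ℕ) (x : C) (hx : p ^ n • x = 0) : ∃ y : B, p ^ n • y = 0 ∧ g y = x := by
  obtain ⟨y, rfl⟩ := hg x
  obtain ⟨u, hu⟩ := (hfg (p ^ n • y)).1 (by rw [map_smul, hx])
  obtain ⟨t, ht⟩ := (hWexact ((1 : W) ⊗ₜ[R] y - s ((1 : W) ⊗ₜ[R] g y))).1 (by
    have := LinearMap.congr_fun hs ((1 : W) ⊗ₜ[R] g y)
    simp only [LinearMap.comp_apply, LinearMap.id_apply] at this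
    rw [map_sub, this, LinearMap.baseChange_tmul, sub_self])
  have key : (1 : W) ⊗ₜ[R] u = p ^ n • t := by
    apply hWinj
    rw [← algebraMap_smul W (p ^ n) t, map_smul, ht, smul_sub, ← map_smul, algebraMap_smul,
      algebraMap_smul, ← TensorProduct.tmul_smul, ← TensorProduct.tmul_smul, hx,
      TensorProduct.tmul_zero, map_zero, sub_zero, LinearMap.baseChange_tmul, hu]
  obtain ⟨v, rfl⟩ := aux_pure p hinj a na as e n u t key
  refine ⟨y - f v, ?_, ?_⟩
  · rw [smul_sub, ← hu, map_smul, sub_self]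
  · rw [map_sub, hfg.apply_apply_eq_zero, sub_zero]

theorem aux_main_s2 {R : Type*} [CommRing R] [IsDomain R] (p : R) (hp : p ≠ 0)
    {A B C : Type*} [AddCommGroup A] [Module R A] [AddCommGroup B] [Module R B]
    [AddCommGroup C] [Module R C] (c nc : ℕ) (cs : Fin nc → ℕ)
    (e : C ≃ₗ[R] ((Fin c → R) × ((i : Fin nc) → R ⧸ Ideal.span {p ^ cs i})))
    (f : A →ₗ[R] B) (g : B →ₗ[R] C) (hf : Function.Injective f)
    (hfg : Function.Exact f g)
    (hl : ∀ (n : ℕ) (x : C), p ^ n • x = 0 → ∃ y : B, p ^ n • y = 0 ∧ g y = x) :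
    Function.Injective (mapPTors p f) ∧
    Function.Exact (mapPTors p f) (mapPTors p g) ∧
    Function.Surjective (mapPTors p g) ∧
    ∃ s : pPowerTorsion R p C →ₗ[R] pPowerTorsion R p B,
      (mapPTors p g).comp s = LinearMap.id := by
  refine ⟨?_, ?_, ?_, ?_⟩
  · intro x y hxy
    exact Subtype.ext (hf (congrArg Subtype.val hxy))
  · intro y
    constructor
    · intro h
      obtain ⟨x, hx⟩ := (hfg y.1).1 (congrArg Subtype.val h)
      obtain ⟨n, hn⟩ := y.2
      exact ⟨⟨x, n, hf (by rw [map_smul, hx, hn, map_zero])⟩, Subtype.ext hx⟩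
    · rintro ⟨x, rfl⟩
      exact Subtype.ext (hfg.apply_apply_eq_zero x.1)
  · rintro ⟨x, n, hn⟩
    obtain ⟨y, hy, hyx⟩ := hl n x hn
    exact ⟨⟨y, n, hy⟩, Subtype.ext hyx⟩
  · have h0 : ∀ i, ∃ y : B, p ^ cs i • y = 0 ∧
        g y = e.symm (0, Pi.single i (Ideal.Quotient.mk _ 1)) := by
      intro i
      apply hl
      rw [← map_smul, Prod.smul_mk, smul_zero, ← Pi.single_smul]
      have : p ^ cs i • (Ideal.Quotient.mk (Ideal.span {p ^ cs i}) 1) = 0 := by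
        change Ideal.Quotient.mk (Ideal.span {p ^ cs i}) (p ^ cs i * 1) = 0
        rw [Ideal.Quotient.eq_zero_iff_mem, mul_one]
        exact Ideal.mem_span_singleton_self _
      rw [this, Pi.single_zero, Prod.mk_zero_zero, map_zero]
    choose y hy hgy using h0
    let σ (i : Fin nc) : (R ⧸ Ideal.span {p ^ cs i}) →ₗ[R] B :=
      Submodule.liftQ _ (LinearMap.toSpanSingleton R B (y i)) (by
        rw [Ideal.span, Submodule.span_le]
        rintro z rfl
        simpa using hy i)
    have hσ : ∀ i q, g (σ i q) = e.symm (0, Pi.single i q) := by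
      intro i q
      obtain ⟨r, rfl⟩ := Ideal.Quotient.mk_surjective q
      have h1 : σ i (Ideal.Quotient.mk _ r) = r • y i := rfl
      have h2 : Ideal.Quotient.mk (Ideal.span {p ^ cs i}) r
          = r • Ideal.Quotient.mk (Ideal.span {p ^ cs i}) 1 := by
        change _ = Ideal.Quotient.mk (Ideal.span {p ^ cs i}) (r * 1)
        rw [mul_one]
      rw [h1, map_smul, hgy, ← map_smul, Prod.smul_mk, smul_zero, ← Pi.single_smul, ← h2]
    let τ : C →ₗ[R] B := (∑ i, σ i ∘ₗ LinearMap.proj i) ∘ₗ LinearMap.snd _ _ _ ∘ₗ e.toLinearMap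
    have hτ : ∀ x, g (τ x) = e.symm (0, (e x).2) := by
      intro x
      have h1 : τ x = ∑ i, σ i ((e x).2 i) := by simp [τ]
      rw [h1, map_sum]
      simp_rw [hσ]
      rw [← map_sum]
      congr 1
      ext i
      · simp [Prod.fst_sum]
      · simp only [Prod.snd_sum]
        rw [Finset.univ_sum_single]
    refine ⟨mapPTors p τ, LinearMap.ext ?_⟩
    rintro ⟨x, n, hn⟩
    apply Subtype.ext
    change g (τ x) = x
    rw [hτ]
    apply e.injective
    rw [e.apply_symm_apply]
    refine Prod.ext ?_ rfl
    have h2 : p ^ n • (e x).1 = 0 := by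
      have := congrArg (fun z => (e z).1) hn
      simpa only [map_smul, map_zero, Prod.smul_fst, Prod.fst_zero] using this
    exact ((smul_eq_zero.1 h2).resolve_left (pow_ne_zero _ hp)).symm

variable {p : ℕ} [Fact p.Prime] {k : Type*} [Field k] [CharP k p] [PerfectField k]

local notation "𝕊" => PowerSeries (WittVector p k)

theorem torsion_sequence_split
    (W : Type*) [CommRing W] [Algebra 𝕊 W]
    (hreg : (p : W) ∈ nonZeroDivisors W)
    (hinj : ∀ n : ℕ, 1 ≤ n → ∀ x : 𝕊,
      algebraMap 𝕊 W x ∈ Ideal.span {(p : W) ^ n} → x ∈ Ideal.span {(p : 𝕊) ^ n})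
    (A B C : Type*) [AddCommGroup A] [AddCommGroup B] [AddCommGroup C]
    [Module 𝕊 A] [Module 𝕊 B] [Module 𝕊 C]
    (a : ℕ) (na : ℕ) (as : Fin na → ℕ) (has : ∀ i, 1 ≤ as i)
    (hA : Nonempty (A ≃ₗ[𝕊]
      ((Fin a → 𝕊) × ((i : Fin na) → 𝕊 ⧸ Ideal.span {(p : 𝕊) ^ as i}))))
    (b : ℕ) (nb : ℕ) (bs : Fin nb → ℕ) (hbs : ∀ i, 1 ≤ bs i)
    (hB : Nonempty (B ≃ₗ[𝕊]
      ((Fin b → 𝕊) × ((i : Fin nb) → 𝕊 ⧸ Ideal.span {(p : 𝕊) ^ bs i}))))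
    (c : ℕ) (nc : ℕ) (cs : Fin nc → ℕ) (hcs : ∀ i, 1 ≤ cs i)
    (hC : Nonempty (C ≃ₗ[𝕊]
      ((Fin c → 𝕊) × ((i : Fin nc) → 𝕊 ⧸ Ideal.span {(p : 𝕊) ^ cs i}))))
    (f : A →ₗ[𝕊] B) (g : B →ₗ[𝕊] C)
    (hf : Function.Injective f) (hfg : Function.Exact f g) (hg : Function.Surjective g)
    (hWinj : Function.Injective (f.baseChange W))
    (hWexact : Function.Exact (f.baseChange W) (g.baseChange W))
    (hWsurj : Function.Surjective (g.baseChange W))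
    (hWsplit : ∃ s : W ⊗[𝕊] C →ₗ[W] W ⊗[𝕊] B, (g.baseChange W).comp s = LinearMap.id) :
    Function.Injective (mapPTors (p : 𝕊) f) ∧
    Function.Exact (mapPTors (p : 𝕊) f) (mapPTors (p : 𝕊) g) ∧
    Function.Surjective (mapPTors (p : 𝕊) g) ∧
    ∃ s : pPowerTorsion 𝕊 (p : 𝕊) C →ₗ[𝕊] pPowerTorsion 𝕊 (p : 𝕊) B,
      (mapPTors (p : 𝕊) g).comp s = LinearMap.id := by
  obtain ⟨eA⟩ := hA
  obtain ⟨eC⟩ := hC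
  obtain ⟨s, hs⟩ := hWsplit
  have hp : (p : 𝕊) ≠ 0 := by
    intro h
    have h1 := congrArg (PowerSeries.constantCoeff (R := WittVector p k)) h
    rw [map_natCast, map_zero] at h1
    exact WittVector.p_nonzero p k h1
  refine aux_main_s2 (p : 𝕊) hp c nc cs eC f g hf hfg ?_
  intro n x hx
  exact aux_lift (W := W) (p : 𝕊) (by simpa only [map_natCast] using hinj) a na as eA f g hfg hg
    hWinj hWexact s hs n x hx
end

section
/- Let W be a commutative 𝔖-algebra in which p is a non-zero-divisor and such that for every integer n ≥ 1 the induced ring map 𝔖/(p^n) → W/(p^n) is injective. Let T = ⊕_{i=1}^{r} 𝔖/(p^{a_i}) for positive integers a_i, and let T' = 𝔖^{⊕m} ⊕ ⊕_{j=1}^{s} 𝔖/(p^{b_j}) for a nonnegative integer m and positive integers b_j. Then every short exact sequence of 𝔖-modules 0 → T' → X → T → 0 whose base change 0 → T' ⊗_𝔖 W → X ⊗_𝔖 W → T ⊗_𝔖 W → 0 is a split exact sequence of W-modules is itself split exact. -/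
/-!
Context: `p` a prime, `k` a perfect field of characteristic `p`, `𝕊 = W(k)[[z]]`.
`W` is a commutative `𝕊`-algebra in which `p` is a non-zero-divisor and such that
`𝕊/(p^n) → W/(p^n)` is injective for all `n ≥ 1`.

STATEMENT 3: with `T = ⨁_{i=1}^r 𝕊/(p^{aᵢ})` and `T' = 𝕊^{⊕m} ⊕ ⨁_{j=1}^s 𝕊/(p^{bⱼ})`,
every short exact sequence `0 → T' → X → T → 0` of `𝕊`-modules whose base change to `W`
is split exact is itself split exact.
-/

open TensorProduct

theorem aux_component {S W : Type*} [CommRing S] [CommRing W] [Algebra S W] (q : S)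
    (hinj : ∀ n : ℕ, 1 ≤ n → ∀ x : S,
      algebraMap S W x ∈ Ideal.span {(algebraMap S W q) ^ n} → x ∈ Ideal.span {q ^ n})
    {M : Type*} [AddCommGroup M] [Module S M] (c n : ℕ) (hc : 1 ≤ c) (hn : 1 ≤ n)
    (π : M →ₗ[S] S ⧸ Ideal.span {q ^ n}) (t : M) (u : W ⊗[S] M)
    (h : (1 : W) ⊗ₜ[S] t = q ^ c • u) : ∃ t' : S ⧸ Ideal.span {q ^ n}, π t = q ^ c • t' := by
  let I : Ideal W := Ideal.span {(algebraMap S W q) ^ n}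
  let φ : (S ⧸ Ideal.span {q ^ n}) →ₗ[S] W ⧸ I :=
    Submodule.liftQ _ (Algebra.linearMap S (W ⧸ I)) (by
      rw [Ideal.span, Submodule.span_le]
      rintro x rfl
      simp only [SetLike.mem_coe, LinearMap.mem_ker, Algebra.linearMap_apply]
      rw [IsScalarTower.algebraMap_apply S W (W ⧸ I), Ideal.Quotient.algebraMap_eq,
        Ideal.Quotient.eq_zero_iff_mem, map_pow]
      exact Ideal.subset_span rfl)
  let Φ : W ⊗[S] M →ₗ[W] W ⧸ I := LinearMap.liftBaseChange W (φ ∘ₗ π)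
  have h1 : φ (π t) = q ^ c • Φ u := by
    have := congrArg Φ h
    rw [← algebraMap_smul W (q ^ c) u, map_smul, algebraMap_smul] at this
    simpa [Φ] using this
  obtain ⟨x, hx⟩ := Ideal.Quotient.mk_surjective (π t)
  obtain ⟨w, hw⟩ := Ideal.Quotient.mk_surjective (Φ u)
  have h2 : Ideal.Quotient.mk I (algebraMap S W x) =
      Ideal.Quotient.mk I (algebraMap S W q ^ c * w) := by
    have e1 : φ (π t) = Ideal.Quotient.mk I (algebraMap S W x) := by rw [← hx]; rfl
    rw [← e1, h1, ← hw, ← algebraMap_smul W (q ^ c), map_pow]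
    rfl
  rw [Ideal.Quotient.eq, Ideal.mem_span_singleton] at h2
  have h3 : x ∈ Ideal.span {q ^ (min c n)} := by
    apply hinj _ (le_min hc hn)
    rw [Ideal.mem_span_singleton]
    have h4 := (pow_dvd_pow (algebraMap S W q) (min_le_right c n)).trans h2
    have h5 := (pow_dvd_pow (algebraMap S W q) (min_le_left c n)).trans (Dvd.intro w rfl)
    simpa using dvd_add h4 h5
  rw [Ideal.mem_span_singleton] at h3
  obtain ⟨y, rfl⟩ := h3
  rcases le_total c n with hcn | hcn
  · refine ⟨Ideal.Quotient.mk _ y, ?_⟩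
    rw [← hx, min_eq_left hcn]
    rfl
  · refine ⟨0, ?_⟩
    rw [← hx, min_eq_right hcn, smul_zero, Ideal.Quotient.eq_zero_iff_mem,
      Ideal.mem_span_singleton]
    exact Dvd.intro _ rfl

theorem aux_free {S W : Type*} [CommRing S] [CommRing W] [Algebra S W] (q : S)
    (hinj : ∀ n : ℕ, 1 ≤ n → ∀ x : S,
      algebraMap S W x ∈ Ideal.span {(algebraMap S W q) ^ n} → x ∈ Ideal.span {q ^ n})
    {M : Type*} [AddCommGroup M] [Module S M] (c : ℕ) (hc : 1 ≤ c)
    (π : M →ₗ[S] S) (t : M) (u : W ⊗[S] M)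
    (h : (1 : W) ⊗ₜ[S] t = q ^ c • u) : ∃ t' : S, π t = q ^ c • t' := by
  let Φ : W ⊗[S] M →ₗ[W] W := LinearMap.liftBaseChange W (Algebra.linearMap S W ∘ₗ π)
  have h1 : algebraMap S W (π t) = q ^ c • Φ u := by
    have := congrArg Φ h
    rw [← algebraMap_smul W (q ^ c) u, map_smul, algebraMap_smul] at this
    simpa [Φ] using this
  have h3 := hinj c hc (π t) (by
    rw [h1, Ideal.mem_span_singleton, Algebra.smul_def, map_pow]
    exact Dvd.intro _ rfl)
  rw [Ideal.mem_span_singleton] at h3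
  exact h3

theorem aux_main_s3 {S W : Type*} [CommRing S] [CommRing W] [Algebra S W] (q : S)
    (hinj : ∀ n : ℕ, 1 ≤ n → ∀ x : S,
      algebraMap S W x ∈ Ideal.span {(algebraMap S W q) ^ n} → x ∈ Ideal.span {q ^ n})
    (r : ℕ) (a : Fin r → ℕ) (ha : ∀ i, 1 ≤ a i)
    (m s : ℕ) (b : Fin s → ℕ) (hb : ∀ j, 1 ≤ b j)
    (X : Type*) [AddCommGroup X] [Module S X]
    (f : ((Fin m → S) × ((j : Fin s) → S ⧸ Ideal.span {q ^ b j})) →ₗ[S] X)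
    (g : X →ₗ[S] ((i : Fin r) → S ⧸ Ideal.span {q ^ a i}))
    (hfg : Function.Exact f g) (hg : Function.Surjective g)
    (hWinj : Function.Injective (f.baseChange W))
    (hWexact : Function.Exact (f.baseChange W) (g.baseChange W))
    (hWsplit : ∃ σ : W ⊗[S] ((i : Fin r) → S ⧸ Ideal.span {q ^ a i}) →ₗ[W]
        W ⊗[S] X, (g.baseChange W).comp σ = LinearMap.id) :
    ∃ σ : ((i : Fin r) → S ⧸ Ideal.span {q ^ a i}) →ₗ[S] X,
      g.comp σ = LinearMap.id := by
  obtain ⟨τ, hτ⟩ := hWsplit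
  have key : ∀ i : Fin r, ∃ x : X, g x = Pi.single i 1 ∧ q ^ a i • x = 0 := by
    intro i
    obtain ⟨x, hx⟩ := hg (Pi.single i 1)
    have hz : q ^ a i • (Pi.single i 1 : (i : Fin r) → S ⧸ Ideal.span {q ^ a i}) = 0 := by
      rw [← Pi.single_smul]
      have : q ^ a i • (1 : S ⧸ Ideal.span {q ^ a i}) = 0 := by
        rw [← map_one (Ideal.Quotient.mk (Ideal.span {q ^ a i})), ← Ideal.Quotient.mk_eq_mk,
          ← Submodule.Quotient.mk_smul, Submodule.Quotient.mk_eq_zero]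
        simpa using Ideal.mem_span_singleton_self (q ^ a i)
      rw [this, Pi.single_zero]
    obtain ⟨t, ht⟩ := (hfg (q ^ a i • x)).1 (by rw [map_smul, hx, hz])
    obtain ⟨u, hu⟩ := (hWexact ((1 : W) ⊗ₜ[S] x - τ (1 ⊗ₜ[S] Pi.single i 1))).1 (by
      rw [map_sub, LinearMap.baseChange_tmul, hx, ← LinearMap.comp_apply, hτ]
      simp)
    have htu : (1 : W) ⊗ₜ[S] t = q ^ a i • u := by
      apply hWinj
      rw [← algebraMap_smul W (q ^ a i) u, map_smul, hu, smul_sub, ← map_smul, algebraMap_smul,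
        algebraMap_smul, ← TensorProduct.tmul_smul, ← TensorProduct.tmul_smul, hz,
        LinearMap.baseChange_tmul, ht]
      simp
    have hA : ∀ j : Fin m, ∃ t' : S, t.1 j = q ^ a i • t' := fun j =>
      aux_free q hinj (a i) (ha i) (LinearMap.proj j ∘ₗ LinearMap.fst S _ _) t u htu
    have hB : ∀ j : Fin s, ∃ t' : S ⧸ Ideal.span {q ^ b j}, t.2 j = q ^ a i • t' := fun j =>
      aux_component q hinj (a i) (b j) (ha i) (hb j)
        (LinearMap.proj j ∘ₗ LinearMap.snd S _ _) t u htu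
    choose A hA using hA
    choose B hB using hB
    have htt : t = q ^ a i • (A, B) := Prod.ext (funext hA) (funext hB)
    refine ⟨x - f (A, B), ?_, ?_⟩
    · rw [map_sub, hx, hfg.apply_apply_eq_zero, sub_zero]
    · rw [smul_sub, ← map_smul, ← htt, ht, sub_self]
  choose x hx hx0 using key
  let ψ : (i : Fin r) → (S ⧸ Ideal.span {q ^ a i}) →ₗ[S] X := fun i =>
    Submodule.liftQ _ (LinearMap.toSpanSingleton S X (x i)) (by
      rw [Ideal.span, Submodule.span_le]
      rintro y rfl
      simpa using hx0 i)
  refine ⟨LinearMap.lsum S _ S ψ, ?_⟩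
  apply LinearMap.pi_ext'
  intro i
  apply Submodule.linearMap_qext
  apply LinearMap.ext_ring
  have : ψ i (Submodule.Quotient.mk 1) = x i := by
    change (1 : S) • x i = x i
    exact one_smul _ _
  simp only [LinearMap.comp_apply, Submodule.mkQ_apply, LinearMap.id_apply]
  have e : (LinearMap.lsum S (fun i => S ⧸ Ideal.span {q ^ a i}) S) ψ
      (LinearMap.single S (fun i => S ⧸ Ideal.span {q ^ a i}) i (Submodule.Quotient.mk 1)) =
      ψ i (Submodule.Quotient.mk 1) := by
    rw [LinearMap.lsum_apply, LinearMap.sum_apply, Finset.sum_eq_single i]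
    · simp
    · intro j _ hj
      rw [LinearMap.comp_apply, LinearMap.proj_apply, LinearMap.single_apply,
        Pi.single_eq_of_ne hj, map_zero]
    · simp
  rw [e, this, hx]
  rfl

variable {p : ℕ} [Fact p.Prime] {k : Type*} [Field k] [CharP k p] [PerfectField k]

local notation "𝕊" => PowerSeries (WittVector p k)

theorem ses_split_of_baseChange_split
    (W : Type*) [CommRing W] [Algebra 𝕊 W]
    (hreg : (p : W) ∈ nonZeroDivisors W)
    (hinj : ∀ n : ℕ, 1 ≤ n → ∀ x : 𝕊,
      algebraMap 𝕊 W x ∈ Ideal.span {(p : W) ^ n} → x ∈ Ideal.span {(p : 𝕊) ^ n})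
    (r : ℕ) (a : Fin r → ℕ) (ha : ∀ i, 1 ≤ a i)
    (m s : ℕ) (b : Fin s → ℕ) (hb : ∀ j, 1 ≤ b j)
    (X : Type*) [AddCommGroup X] [Module 𝕊 X]
    (f : ((Fin m → 𝕊) × ((j : Fin s) → 𝕊 ⧸ Ideal.span {(p : 𝕊) ^ b j})) →ₗ[𝕊] X)
    (g : X →ₗ[𝕊] ((i : Fin r) → 𝕊 ⧸ Ideal.span {(p : 𝕊) ^ a i}))
    (hf : Function.Injective f) (hfg : Function.Exact f g) (hg : Function.Surjective g)
    (hWinj : Function.Injective (f.baseChange W))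
    (hWexact : Function.Exact (f.baseChange W) (g.baseChange W))
    (hWsurj : Function.Surjective (g.baseChange W))
    (hWsplit : ∃ σ : W ⊗[𝕊] ((i : Fin r) → 𝕊 ⧸ Ideal.span {(p : 𝕊) ^ a i}) →ₗ[W]
        W ⊗[𝕊] X, (g.baseChange W).comp σ = LinearMap.id) :
    ∃ σ : ((i : Fin r) → 𝕊 ⧸ Ideal.span {(p : 𝕊) ^ a i}) →ₗ[𝕊] X,
      g.comp σ = LinearMap.id := by
  have hp : algebraMap 𝕊 W (p : 𝕊) = (p : W) := map_natCast _ p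
  exact aux_main_s3 (W := W) (p : 𝕊) (by rw [hp]; exact hinj) r a ha m s b hb X f g hfg hg
    hWinj hWexact hWsplit
end

section
/- Let 0 → A →^α B →^β C → 0 be a short exact sequence of 𝔖-modules. Assume that the induced sequence 0 → A_tors → B_tors → C_tors → 0 is split exact, and that the quotient C_tf := C / C_tors is a finite free 𝔖-module. Then β : B → C is split surjective, i.e. there exists an 𝔖-linear map s : C → B with β ∘ s = id_C. -/
variable {p : ℕ} [Fact p.Prime] {k : Type*} [Field k] [CharP k p] [PerfectField k]

local notation "𝕊" => PowerSeries (WittVector p k)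

theorem split_surjective_of_torsion_split
    (A B C : Type*) [AddCommGroup A] [AddCommGroup B] [AddCommGroup C]
    [Module 𝕊 A] [Module 𝕊 B] [Module 𝕊 C]
    (α : A →ₗ[𝕊] B) (β : B →ₗ[𝕊] C)
    (hα : Function.Injective α) (hαβ : Function.Exact α β) (hβ : Function.Surjective β)
    (htinj : Function.Injective (mapPTors (p : 𝕊) α))
    (htexact : Function.Exact (mapPTors (p : 𝕊) α) (mapPTors (p : 𝕊) β))
    (htsurj : Function.Surjective (mapPTors (p : 𝕊) β))
    (htsplit : ∃ s : pPowerTorsion 𝕊 (p : 𝕊) C →ₗ[𝕊] pPowerTorsion 𝕊 (p : 𝕊) B,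
      (mapPTors (p : 𝕊) β).comp s = LinearMap.id)
    [Module.Finite 𝕊 (C ⧸ pPowerTorsion 𝕊 (p : 𝕊) C)]
    [Module.Free 𝕊 (C ⧸ pPowerTorsion 𝕊 (p : 𝕊) C)] :
    ∃ s : C →ₗ[𝕊] B, β.comp s = LinearMap.id := by
  obtain ⟨t, ht⟩ := htsplit
  let T := pPowerTorsion 𝕊 (p : 𝕊) C
  obtain ⟨σ, hσ⟩ := Module.projective_lifting_property T.mkQ LinearMap.id T.mkQ_surjective
  obtain ⟨g, hg⟩ := Module.projective_lifting_property β σ hβ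
  have hmem : ∀ c : C, (LinearMap.id - σ.comp T.mkQ : C →ₗ[𝕊] C) c ∈ T := by
    intro c
    refine (Submodule.Quotient.mk_eq_zero T).1 ?_
    change T.mkQ _ = 0
    have h := LinearMap.congr_fun hσ (T.mkQ c)
    simp only [LinearMap.comp_apply, LinearMap.id_apply] at h
    simp only [LinearMap.sub_apply, LinearMap.comp_apply, LinearMap.id_apply, map_sub]
    rw [h, sub_self]
  let τ : C →ₗ[𝕊] T := LinearMap.codRestrict T _ hmem
  refine ⟨g.comp T.mkQ + (Submodule.subtype _).comp (t.comp τ), ?_⟩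
  ext c
  have h1 : β (g (T.mkQ c)) = σ (T.mkQ c) := LinearMap.congr_fun hg (T.mkQ c)
  have h2 : β (t (τ c) : B) = (τ c : C) :=
    congrArg Subtype.val (LinearMap.congr_fun ht (τ c))
  have h3 : (τ c : C) = c - σ (T.mkQ c) := rfl
  change β (g (T.mkQ c) + (t (τ c) : B)) = c
  rw [map_add, h1, h2, h3]
  abel
end

section
/- Let f : M → N be a homomorphism of finitely generated Λ-modules. If for every prime number ℓ ∉ S the induced map of Λ_ℓ-modules f ⊗_Λ Λ_ℓ : M ⊗_Λ Λ_ℓ → N ⊗_Λ Λ_ℓ is the zero map, then f = 0. -/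
/-!
Context: `S` a finite set of primes, `R = ℤ[S⁻¹]`, `Λ = R[[t]]`, and for a prime
`ℓ ∉ S`, `Λ_ℓ = ℤ_ℓ[[t]]`, regarded as a `Λ`-algebra via the ring map applying the
canonical (and unique) ring map `R → ℤ_ℓ` to each coefficient.

STATEMENT 5: if `f : M → N` is a homomorphism of finitely generated `Λ`-modules such
that `f ⊗_Λ Λ_ℓ = 0` for every prime `ℓ ∉ S`, then `f = 0`.
-/

/-- `ℤ[S⁻¹]`: the localization of `ℤ` at the multiplicative set generated by the
primes in `S`. -/
abbrev Rloc (S : Finset ℕ) : Type :=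
  Localization (Submonoid.closure ((fun q : ℕ => (q : ℤ)) '' (S : Set ℕ)))

/-- The ring map from `ZMod n` to a ring in which `n = 0`. -/
noncomputable def zmodHom {A : Type*} [CommRing A] (n : ℕ) (h : (n : A) = 0) : ZMod n →+* A :=
  haveI := ringChar.charP A
  ZMod.castHom (ringChar.dvd h) A

theorem exists_hom_padic (S : Finset ℕ) (hS : ∀ q ∈ S, Nat.Prime q) (l : ℕ) [hl : Fact l.Prime]
    (hlS : l ∉ S) : Nonempty (Rloc S →+* ℤ_[l]) := by
  have key : ∀ y : Submonoid.closure ((fun q : ℕ => (q : ℤ)) '' (S : Set ℕ)),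
      IsUnit (Int.castRingHom ℤ_[l] y) := by
    have : Submonoid.closure ((fun q : ℕ => (q : ℤ)) '' (S : Set ℕ)) ≤
        (IsUnit.submonoid ℤ_[l]).comap (Int.castRingHom ℤ_[l]).toMonoidHom := by
      rw [Submonoid.closure_le]
      rintro _ ⟨q, hq, rfl⟩
      change IsUnit (((q : ℤ) : ℤ_[l]))
      by_contra hu
      rw [PadicInt.not_isUnit_iff, PadicInt.norm_int_lt_one_iff_dvd, Int.natCast_dvd_natCast,
        Nat.prime_dvd_prime_iff_eq hl.out (hS q hq)] at hu
      exact hlS (hu ▸ hq)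
    exact fun y => this y.2
  exact ⟨IsLocalization.lift key⟩

open scoped TensorProduct in
theorem mem_smul_of_tmul_eq_zero (S : Finset ℕ) (l : ℕ) [hl : Fact l.Prime] (k : ℕ)
    {N : Type*} [AddCommGroup N] [Module (PowerSeries (Rloc S)) N] (φ : Rloc S →+* ℤ_[l])
    [Algebra (PowerSeries (Rloc S)) (PowerSeries ℤ_[l])]
    (hφ : algebraMap (PowerSeries (Rloc S)) (PowerSeries ℤ_[l]) = PowerSeries.map φ)
    (n : N) (hn : (1 : PowerSeries ℤ_[l]) ⊗ₜ[PowerSeries (Rloc S)] n = 0) :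
    n ∈ (Ideal.span {(l : PowerSeries (Rloc S))} ^ k • ⊤ : Submodule (PowerSeries (Rloc S)) N) := by
  let I : Ideal (Rloc S) := Ideal.span {(l : Rloc S) ^ k}
  let π : PowerSeries (Rloc S) →+* PowerSeries (Rloc S ⧸ I) := PowerSeries.map (Ideal.Quotient.mk I)
  have hπ : Function.Surjective π := PowerSeries.map_surjective _ Ideal.Quotient.mk_surjective
  have hA : ((l ^ k : ℕ) : (Rloc S ⧸ I)) = 0 := by
    have : (Ideal.Quotient.mk I) ((l : Rloc S) ^ k) = 0 :=
      Ideal.Quotient.eq_zero_iff_mem.2 (Ideal.mem_span_singleton_self _)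
    simpa using this
  let c : ZMod (l ^ k) →+* (Rloc S ⧸ I) := zmodHom (A := Rloc S ⧸ I) (l ^ k) hA
  let ψ : ℤ_[l] →+* (Rloc S ⧸ I) := c.comp (PadicInt.toZModPow k)
  have hψ : ψ.comp φ = Ideal.Quotient.mk I :=
    IsLocalization.ringHom_ext (Submonoid.closure ((fun q : ℕ => (q : ℤ)) '' (S : Set ℕ)))
      (RingHom.ext_int _ _)
  let e := RingHom.quotientKerEquivOfSurjective hπ
  let g : PowerSeries ℤ_[l] →+* PowerSeries (Rloc S) ⧸ RingHom.ker π :=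
    (e.symm : PowerSeries (Rloc S ⧸ I) →+* PowerSeries (Rloc S) ⧸ RingHom.ker π).comp (PowerSeries.map ψ)
  have hg : ∀ x, g (algebraMap _ _ x) = Ideal.Quotient.mk _ x := by
    intro x
    change e.symm _ = _
    rw [RingEquiv.symm_apply_eq, hφ]
    change _ = π x
    ext i
    simp only [π, PowerSeries.coeff_map]
    exact RingHom.congr_fun hψ _
  let gl : PowerSeries ℤ_[l] →ₗ[PowerSeries (Rloc S)] PowerSeries (Rloc S) ⧸ RingHom.ker π :=
    { toFun := g
      map_add' := map_add g
      map_smul' := fun r x => by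
        rw [Algebra.smul_def, map_mul, hg]
        obtain ⟨y, hy⟩ := Ideal.Quotient.mk_surjective (g x)
        rw [← hy]
        rfl }
  have h1 := congrArg (gl.rTensor N) hn
  rw [LinearMap.rTensor_tmul, map_zero] at h1
  have h2 : gl 1 = Ideal.Quotient.mk (RingHom.ker π) 1 := by
    change g 1 = _
    rw [map_one, map_one]
  rw [h2] at h1
  have h3 := congrArg (TensorProduct.quotTensorEquivQuotSMul N (RingHom.ker π)) h1
  rw [TensorProduct.quotTensorEquivQuotSMul_mk_tmul, map_zero, one_smul,
    Submodule.Quotient.mk_eq_zero] at h3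
  refine Submodule.smul_mono_left ?_ h3
  intro x hx
  have hc : ∀ i, ∃ y, PowerSeries.coeff i x = (l : Rloc S) ^ k * y := by
    intro i
    have := congrArg (PowerSeries.coeff i) (RingHom.mem_ker.1 hx)
    simp only [π, PowerSeries.coeff_map, map_zero] at this
    exact Ideal.mem_span_singleton.1 (Ideal.Quotient.eq_zero_iff_mem.1 this)
  choose y hy using hc
  rw [Ideal.span_singleton_pow, Ideal.mem_span_singleton]
  refine ⟨PowerSeries.mk y, ?_⟩
  ext i
  have : (l : PowerSeries (Rloc S)) ^ k = PowerSeries.C ((l : Rloc S) ^ k) := by simp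
  rw [this, PowerSeries.coeff_C_mul, PowerSeries.coeff_mk, hy]

theorem eq_top_of_forall_prime (S : Finset ℕ) (hS : ∀ q ∈ S, Nat.Prime q) (I : Ideal (Rloc S))
    (h : ∀ l : ℕ, l.Prime → l ∉ S → ∃ s : Rloc S, 1 - l * s ∈ I) : I = ⊤ := by
  by_contra hI
  obtain ⟨m, hm, hIm⟩ := Ideal.exists_le_maximal I hI
  have hnot : ∀ p : ℕ, p.Prime → (p : Rloc S) ∉ m := by
    intro p hp hpm
    by_cases hpS : p ∈ S
    · have hu : IsUnit (algebraMap ℤ (Rloc S) (p : ℤ)) :=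
        IsLocalization.map_units (M := Submonoid.closure ((fun q : ℕ => (q : ℤ)) '' (S : Set ℕ)))
          (Rloc S) ⟨(p : ℤ), Submonoid.subset_closure ⟨p, hpS, rfl⟩⟩
      refine hm.ne_top (Ideal.eq_top_of_isUnit_mem m hpm ?_)
      simpa using hu
    · obtain ⟨s, hs⟩ := h p hp hpS
      refine hm.ne_top ((Ideal.eq_top_iff_one m).2 ?_)
      have := m.add_mem (hIm hs) (m.mul_mem_right s hpm)
      simpa using this
  have hz : ∀ a : ℤ, algebraMap ℤ (Rloc S) a ∈ m → a = 0 := by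
    intro a ha
    let _ := Ideal.Quotient.field m
    obtain ⟨p, hp⟩ := CharP.exists (Rloc S ⧸ m)
    rcases CharP.char_is_prime_or_zero (Rloc S ⧸ m) p with hp' | hp'
    · refine absurd ?_ (hnot p hp')
      rw [← Ideal.Quotient.eq_zero_iff_mem, map_natCast]
      exact CharP.cast_eq_zero _ p
    · subst hp'
      rw [← Ideal.Quotient.eq_zero_iff_mem, eq_intCast, map_intCast,
        CharP.intCast_eq_zero_iff (Rloc S ⧸ m) 0] at ha
      simpa using ha
  have hz' : ∀ x ∈ m, x = 0 := by
    intro x hx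
    obtain ⟨⟨a, b⟩, hab⟩ := IsLocalization.surj
      (Submonoid.closure ((fun q : ℕ => (q : ℤ)) '' (S : Set ℕ))) x
    have ha : a = 0 := hz a (hab ▸ m.mul_mem_right _ hx)
    subst ha
    simp only [map_zero] at hab
    exact (IsLocalization.map_units (Rloc S) b).mul_left_eq_zero.1 hab
  obtain ⟨l, hl, hlS⟩ := (Nat.infinite_setOfPred_prime).exists_notMem_finset S
  have : Fact l.Prime := ⟨hl⟩
  obtain ⟨s, hs⟩ := h l hl hlS
  obtain ⟨φ⟩ := exists_hom_padic S hS l hlS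
  have h0 := congrArg φ (hz' _ (hIm hs))
  rw [map_sub, map_mul, map_one, map_zero, map_natCast, sub_eq_zero] at h0
  exact PadicInt.prime_p.not_isUnit (IsUnit.of_mul_eq_one _ h0.symm)

theorem map_eq_zero_of_padic_baseChange_eq_zero
    (S : Finset ℕ) (hS : ∀ q ∈ S, Nat.Prime q)
    (M N : Type*) [AddCommGroup M] [AddCommGroup N]
    [Module (PowerSeries (Rloc S)) M] [Module (PowerSeries (Rloc S)) N]
    [Module.Finite (PowerSeries (Rloc S)) M] [Module.Finite (PowerSeries (Rloc S)) N]
    (f : M →ₗ[PowerSeries (Rloc S)] N)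
    (h : ∀ (ℓ : ℕ) [Fact ℓ.Prime], ℓ ∉ S →
      ∀ [Algebra (PowerSeries (Rloc S)) (PowerSeries ℤ_[ℓ])],
        (∃ φ : Rloc S →+* ℤ_[ℓ],
            algebraMap (PowerSeries (Rloc S)) (PowerSeries ℤ_[ℓ]) = PowerSeries.map φ) →
        f.baseChange (PowerSeries ℤ_[ℓ]) = 0) :
    f = 0 := by
  have hnoe : IsNoetherianRing (Rloc S) := IsLocalization.isNoetherianRing
    (Submonoid.closure ((fun q : ℕ => (q : ℤ)) '' (S : Set ℕ))) _ inferInstance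
  ext x
  rw [LinearMap.zero_apply]
  set n := f x with hndef
  let J : Ideal (PowerSeries (Rloc S)) := LinearMap.ker (LinearMap.toSpanSingleton _ N n)
  have hJ : ∀ r, r ∈ J ↔ r • n = 0 := fun r => by simp [J]
  have htop : J.map (PowerSeries.constantCoeff (R := Rloc S)) = ⊤ := by
    refine eq_top_of_forall_prime S hS _ fun l hl hlS => ?_
    have : Fact l.Prime := ⟨hl⟩
    obtain ⟨φ⟩ := exists_hom_padic S hS l hlS
    let _ : Algebra (PowerSeries (Rloc S)) (PowerSeries ℤ_[l]) := (PowerSeries.map φ).toAlgebra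
    have h0 := h l hlS ⟨φ, rfl⟩
    have h1 : TensorProduct.tmul (PowerSeries (Rloc S)) (1 : PowerSeries ℤ_[l]) n = 0 := by
      rw [hndef, ← LinearMap.baseChange_tmul, h0, LinearMap.zero_apply]
    have h2 : n ∈ (⨅ i : ℕ, Ideal.span {(l : PowerSeries (Rloc S))} ^ i • ⊤ :
        Submodule (PowerSeries (Rloc S)) N) :=
      (Submodule.mem_iInf _).2 fun k => mem_smul_of_tmul_eq_zero S l k φ rfl n h1
    obtain ⟨⟨r, hr⟩, hrn⟩ := (Ideal.mem_iInf_smul_pow_eq_bot_iff _ n).1 h2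
    obtain ⟨s, rfl⟩ := Ideal.mem_span_singleton.1 hr
    refine ⟨PowerSeries.constantCoeff s, ?_⟩
    have h3 : 1 - (l : PowerSeries (Rloc S)) * s ∈ J := by
      rw [hJ, sub_smul, one_smul, sub_eq_zero]
      exact hrn.symm
    simpa using Ideal.mem_map_of_mem (PowerSeries.constantCoeff (R := Rloc S)) h3
  have h1 : (1 : Rloc S) ∈ J.map (PowerSeries.constantCoeff (R := Rloc S)) := htop ▸ trivial
  obtain ⟨u, hu, hu1⟩ := (Ideal.mem_map_iff_of_surjective _
    (PowerSeries.constantCoeff_surj (R := Rloc S))).1 h1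
  have hunit : IsUnit u := PowerSeries.isUnit_iff_constantCoeff.2 (hu1 ▸ isUnit_one)
  exact hunit.smul_eq_zero.1 ((hJ u).1 hu)
end

section
/- Let 0 → A → B → C → 0 be a short exact sequence of finitely generated Λ-modules. Assume that for every prime number ℓ ∉ S the base-changed sequence 0 → A ⊗_Λ Λ_ℓ → B ⊗_Λ Λ_ℓ → C ⊗_Λ Λ_ℓ → 0 is a split exact sequence of Λ_ℓ-modules. Then the original sequence 0 → A → B → C → 0 is split exact. -/
/-!
Context: `S` a finite set of primes, `R = ℤ[S⁻¹]`, `Λ = R[[t]]`, and for a prime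
`ℓ ∉ S`, `Λ_ℓ = ℤ_ℓ[[t]]`, regarded as a `Λ`-algebra via the ring map applying the
canonical (and unique) ring map `R → ℤ_ℓ` to each coefficient.

STATEMENT 6: if `0 → A → B → C → 0` is a short exact sequence of finitely generated
`Λ`-modules whose base change to `Λ_ℓ` is split exact for every prime `ℓ ∉ S`, then the
original sequence is split exact.
-/

open TensorProduct

theorem approx_lift {L L' A B C F G : Type*} [CommRing L] [CommRing L'] [Algebra L L']
    [AddCommGroup A] [AddCommGroup B] [AddCommGroup C] [AddCommGroup F] [AddCommGroup G]
    [Module L A] [Module L B] [Module L C] [Module L F] [Module L G]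
    [Module.Projective L F] [Module.Projective L G]
    (f : A →ₗ[L] B) (g : B →ₗ[L] C)
    (p : F →ₗ[L] C) (q : G →ₗ[L] F) (hpq : p ∘ₗ q = 0)
    (φ : F →ₗ[L] B) (hφ : g ∘ₗ φ = p) (u : G →ₗ[L] A) (hu : f ∘ₗ u = φ ∘ₗ q)
    (hinj : Function.Injective (f.baseChange L'))
    (hex : Function.Exact (f.baseChange L') (g.baseChange L'))
    (σ : L' ⊗[L] C →ₗ[L'] L' ⊗[L] B) (hσ : (g.baseChange L').comp σ = LinearMap.id)
    (x : L) (θ : L' →ₗ[L] L ⧸ Ideal.span {x}) (hθ : θ 1 = 1) :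
    ∃ (v : F →ₗ[L] A) (w : G →ₗ[L] A), u = v ∘ₗ q + x • w := by
  -- the difference of the two lifts over `L'`
  let ιA : A →ₗ[L] L' ⊗[L] A := TensorProduct.mk L L' A 1
  let ιB : B →ₗ[L] L' ⊗[L] B := TensorProduct.mk L L' B 1
  let ιC : C →ₗ[L] L' ⊗[L] C := TensorProduct.mk L L' C 1
  let δ : F →ₗ[L] L' ⊗[L] B := ιB ∘ₗ φ - (σ.restrictScalars L) ∘ₗ ιC ∘ₗ p
  let fL : L' ⊗[L] A →ₗ[L] L' ⊗[L] B := (f.baseChange L').restrictScalars L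
  have hδ : ∀ y, δ y ∈ LinearMap.range fL := by
    intro y
    have : (g.baseChange L') (δ y) = 0 := by
      have h1 := LinearMap.congr_fun hσ (1 ⊗ₜ[L] p y)
      simp only [LinearMap.comp_apply, LinearMap.id_apply] at h1
      simp only [δ, ιB, ιC, LinearMap.sub_apply, LinearMap.comp_apply, map_sub,
        LinearMap.restrictScalars_apply, TensorProduct.mk_apply, LinearMap.baseChange_tmul, h1]
      rw [← hφ]; simp
    obtain ⟨a, ha⟩ := (hex _).1 this
    exact ⟨a, ha⟩
  obtain ⟨α, hα⟩ := Module.projective_lifting_property fL.rangeRestrict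
    (δ.codRestrict (LinearMap.range fL) hδ) fL.surjective_rangeRestrict
  have hα' : ∀ y, f.baseChange L' (α y) = δ y := fun y =>
    congrArg Subtype.val (LinearMap.congr_fun hα y)
  have hαq : ∀ z, α (q z) = 1 ⊗ₜ[L] u z := by
    intro z
    apply hinj
    rw [hα', LinearMap.baseChange_tmul]
    have h1 : p (q z) = 0 := LinearMap.congr_fun hpq z
    have h2 : f (u z) = φ (q z) := LinearMap.congr_fun hu z
    simp [δ, ιB, ιC, h1, h2]
  let ψ : L' ⊗[L] A →ₗ[L] A ⧸ (Ideal.span {x} • (⊤ : Submodule L A)) :=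
    (TensorProduct.quotTensorEquivQuotSMul A (Ideal.span {x})).toLinearMap ∘ₗ
      TensorProduct.map θ LinearMap.id
  have hψ : ∀ a, ψ (1 ⊗ₜ a) = Submodule.Quotient.mk a := by
    intro a
    have : (1 : L ⧸ Ideal.span {x}) = Ideal.Quotient.mk _ 1 := rfl
    simp only [ψ, LinearMap.comp_apply, TensorProduct.map_tmul, hθ, LinearMap.id_apply, this]
    simp [TensorProduct.quotTensorEquivQuotSMul_mk_tmul]
  obtain ⟨v, hv⟩ := Module.projective_lifting_property
    (Submodule.mkQ (Ideal.span {x} • (⊤ : Submodule L A))) (ψ ∘ₗ α) (Submodule.mkQ_surjective _)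
  have hmem : ∀ z, (u - v ∘ₗ q) z ∈ LinearMap.range (LinearMap.lsmul L A x) := by
    intro z
    have h1 : Submodule.mkQ (Ideal.span {x} • (⊤ : Submodule L A)) (v (q z)) = ψ (α (q z)) :=
      LinearMap.congr_fun hv (q z)
    rw [hαq, hψ, Submodule.mkQ_apply, eq_comm, Submodule.Quotient.eq,
      Submodule.ideal_span_singleton_smul, Submodule.mem_smul_pointwise_iff_exists] at h1
    obtain ⟨b, -, hb⟩ := h1
    exact ⟨b, by simpa using hb⟩
  obtain ⟨w, hw⟩ := Module.projective_lifting_property (LinearMap.lsmul L A x).rangeRestrict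
    ((u - v ∘ₗ q).codRestrict _ hmem) (LinearMap.surjective_rangeRestrict _)
  refine ⟨v, w, ?_⟩
  ext z
  have := congrArg Subtype.val (LinearMap.congr_fun hw z)
  have h3 : x • w z = u z - v (q z) := this
  simp [h3]

theorem krull_step {L M : Type*} [CommRing L] [IsNoetherianRing L] [AddCommGroup M] [Module L M]
    [Module.Finite L M] (N : Submodule L M) (u : M) (x : L)
    (h : ∀ n : ℕ, ∃ v ∈ N, ∃ w : M, u = v + x ^ n • w) : ∃ r : L, (1 - x * r) • u ∈ N := by
  have : (Submodule.Quotient.mk u : M ⧸ N) ∈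
      (⨅ i : ℕ, Ideal.span {x} ^ i • (⊤ : Submodule L (M ⧸ N))) := by
    rw [Submodule.mem_iInf]
    intro n
    obtain ⟨v, hv, w, rfl⟩ := h n
    rw [Submodule.Quotient.mk_add, (Submodule.Quotient.mk_eq_zero N).2 hv, zero_add,
      Submodule.Quotient.mk_smul, Ideal.span_singleton_pow]
    exact Submodule.smul_mem_smul (Ideal.mem_span_singleton_self _) trivial
  rw [Ideal.mem_iInf_smul_pow_eq_bot_iff] at this
  obtain ⟨⟨r, hr⟩, hru⟩ := this
  obtain ⟨s, rfl⟩ := Ideal.mem_span_singleton'.1 hr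
  refine ⟨s, ?_⟩
  rw [← Submodule.Quotient.mk_eq_zero, Submodule.Quotient.mk_smul, sub_smul, one_smul, mul_comm x s,
    sub_eq_zero]
  exact hru.symm

/-- Elements of the multiplicative set are not divisible by primes outside `S`. -/
theorem prime_not_dvd_monoid (S : Finset ℕ) (hS : ∀ q ∈ S, Nat.Prime q) (ℓ : ℕ) (hℓ : ℓ.Prime)
    (hℓS : ℓ ∉ S) (s : ℤ) (hs : s ∈ Submonoid.closure ((fun q : ℕ => (q : ℤ)) '' (S : Set ℕ))) :
    ¬ (ℓ : ℤ) ∣ s := by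
  induction hs using Submonoid.closure_induction with
  | mem x hx =>
    obtain ⟨q, hq, rfl⟩ := hx
    intro hd
    have hd1 : (ℓ : ℤ) ∣ (q : ℤ) := hd
    have hd' : ℓ ∣ q := by exact_mod_cast hd1
    rw [(Nat.prime_dvd_prime_iff_eq hℓ (hS q hq))] at hd'
    exact hℓS (hd' ▸ hq)
  | one =>
    intro hd
    exact hℓ.one_lt.ne' (by exact_mod_cast Int.eq_one_of_dvd_one (by positivity) hd)
  | mul x y _ _ hx hy =>
    intro hd
    exact ((Nat.prime_iff_prime_int.1 hℓ).dvd_or_dvd hd).elim hx hy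

theorem exists_phi (S : Finset ℕ) (hS : ∀ q ∈ S, Nat.Prime q) (ℓ : ℕ) [Fact ℓ.Prime]
    (hℓS : ℓ ∉ S) : ∃ φ : Rloc S →+* ℤ_[ℓ], True := by
  refine ⟨IsLocalization.lift (M := Submonoid.closure ((fun q : ℕ => (q : ℤ)) '' (S : Set ℕ)))
    (g := Int.castRingHom ℤ_[ℓ]) ?_, trivial⟩
  rintro ⟨s, hs⟩
  have := prime_not_dvd_monoid S hS ℓ Fact.out hℓS s hs
  rw [PadicInt.isUnit_iff]
  have h2 := (PadicInt.norm_int_lt_one_iff_dvd (p := ℓ) s).not.2 this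
  exact le_antisymm (PadicInt.norm_le_one _) (not_lt.1 h2)

theorem ker_phi (S : Finset ℕ) (hS : ∀ q ∈ S, Nat.Prime q) (ℓ : ℕ) [hℓ : Fact ℓ.Prime]
    (hℓS : ℓ ∉ S) (n : ℕ) (χ : Rloc S →+* ZMod (ℓ ^ n)) (x : Rloc S) (hx : χ x = 0) :
    ∃ y, x = (ℓ : Rloc S) ^ n * y := by
  obtain ⟨⟨a, s⟩, hs⟩ := IsLocalization.surj
    (Submonoid.closure ((fun q : ℕ => (q : ℤ)) '' (S : Set ℕ))) x
  have h1 := congrArg χ hs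
  simp only [map_mul, hx, zero_mul, eq_intCast, map_intCast] at h1
  have h2 : ((ℓ ^ n : ℕ) : ℤ) ∣ a := (ZMod.intCast_zmod_eq_zero_iff_dvd a (ℓ ^ n)).1 h1.symm
  obtain ⟨b, rfl⟩ := h2
  refine ⟨IsLocalization.mk' _ b s, ?_⟩
  have hu := IsLocalization.map_units (Rloc S) s
  apply hu.mul_right_cancel
  rw [mul_assoc, IsLocalization.mk'_spec, hs]
  simp

theorem exists_theta (S : Finset ℕ) (hS : ∀ q ∈ S, Nat.Prime q) (ℓ : ℕ) [hℓ : Fact ℓ.Prime]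
    (hℓS : ℓ ∉ S) (n : ℕ) [Algebra (PowerSeries (Rloc S)) (PowerSeries ℤ_[ℓ])]
    (φ : Rloc S →+* ℤ_[ℓ])
    (hφ : algebraMap (PowerSeries (Rloc S)) (PowerSeries ℤ_[ℓ]) = PowerSeries.map φ) :
    ∃ θ : PowerSeries ℤ_[ℓ] →ₗ[PowerSeries (Rloc S)]
      PowerSeries (Rloc S) ⧸ Ideal.span {(ℓ : PowerSeries (Rloc S)) ^ n}, θ 1 = 1 := by
  let χ : Rloc S →+* ZMod (ℓ ^ n) := (PadicInt.toZModPow n).comp φ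
  let ρ : PowerSeries ℤ_[ℓ] →+* PowerSeries (ZMod (ℓ ^ n)) := PowerSeries.map (PadicInt.toZModPow n)
  let π : PowerSeries (Rloc S) →+* PowerSeries (ZMod (ℓ ^ n)) := PowerSeries.map χ
  have hπ : Function.Surjective π := by
    intro y
    have hχ : Function.Surjective χ := ZMod.ringHom_surjective χ
    choose z hz using hχ
    refine ⟨PowerSeries.mk fun i => z (PowerSeries.coeff i y), ?_⟩
    ext i
    simp [π, hz]
  have hker : RingHom.ker π = Ideal.span {(ℓ : PowerSeries (Rloc S)) ^ n} := by
    apply le_antisymm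
    · intro y hy
      have h0 : ∀ i, χ (PowerSeries.coeff i y) = 0 := by
        intro i
        have := congrArg (PowerSeries.coeff i) ((RingHom.mem_ker).1 hy)
        simpa [π] using this
      choose z hz using fun i => ker_phi S hS ℓ hℓS n χ _ (h0 i)
      rw [Ideal.mem_span_singleton]
      refine ⟨PowerSeries.mk z, ?_⟩
      have hc : (ℓ : PowerSeries (Rloc S)) ^ n = PowerSeries.C ((ℓ : Rloc S) ^ n) := by simp
      ext i
      rw [hc, PowerSeries.coeff_C_mul, PowerSeries.coeff_mk, hz i]
    · rw [Ideal.span_singleton_le_iff_mem, RingHom.mem_ker]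
      have : ((ℓ ^ n : ℕ) : PowerSeries (ZMod (ℓ ^ n))) = PowerSeries.C ((ℓ ^ n : ℕ) : ZMod (ℓ ^ n)) := by
        simp only [map_natCast]
      rw [map_pow, map_natCast, ← Nat.cast_pow, this, ZMod.natCast_self, map_zero]
  let e := (Ideal.quotEquivOfEq hker.symm).trans (RingHom.quotientKerEquivOfSurjective hπ)
  have he : ∀ a, e.symm (π a) = Ideal.Quotient.mk _ a := by
    intro a
    rw [RingEquiv.symm_apply_eq]
    rfl
  have hρ : ∀ a, ρ (algebraMap (PowerSeries (Rloc S)) (PowerSeries ℤ_[ℓ]) a) = π a := by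
    intro a
    rw [hφ]
    ext i
    simp [ρ, π, χ]
  refine ⟨{ toFun := fun y => e.symm (ρ y), map_add' := fun y z => by rw [map_add, map_add],
            map_smul' := ?_ }, ?_⟩
  swap
  · change e.symm (ρ 1) = 1
    rw [map_one, map_one]
  intro a y
  rw [Algebra.smul_def, map_mul, map_mul, hρ, he, RingHom.id_apply]
  obtain ⟨z, hz⟩ := Ideal.Quotient.mk_surjective (e.symm (ρ y))
  rw [← hz]
  rfl

theorem prime_ideal_int (S : Finset ℕ) (P : Ideal ℤ) [hP : P.IsPrime]
    (hd : ∀ q ∈ S, (q : ℤ) ∉ P) :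
    ∃ ℓ : ℕ, ℓ.Prime ∧ ℓ ∉ S ∧ P ≤ Ideal.span {(ℓ : ℤ)} := by
  by_cases h0 : P = ⊥
  · obtain ⟨ℓ, hℓ, hp⟩ := Nat.exists_infinite_primes (S.sup id + 1)
    refine ⟨ℓ, hp, fun hm => ?_, by simp [h0]⟩
    have := Finset.le_sup (f := id) hm
    simp at this
    omega
  · obtain ⟨d, hd'⟩ := IsPrincipalIdealRing.principal P
    have hd' : P = Ideal.span {d} := hd'
    have hdp : Prime d := by
      rw [← Ideal.span_singleton_prime, ← hd']
      · exact hP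
      · rintro rfl; exact h0 (by simpa using hd')
    refine ⟨d.natAbs, Int.prime_iff_natAbs_prime.1 hdp, fun hm => hd _ hm ?_, ?_⟩
    · rw [hd', Ideal.mem_span_singleton]; exact Int.dvd_natAbs.2 dvd_rfl
    · rw [hd', Ideal.span_singleton_le_span_singleton]; exact Int.natAbs_dvd.2 dvd_rfl

theorem ideal_top (S : Finset ℕ) (hS : ∀ q ∈ S, Nat.Prime q) (I : Ideal (PowerSeries (Rloc S)))
    (h : ∀ ℓ : ℕ, ℓ.Prime → ℓ ∉ S → ∃ r, 1 - (ℓ : PowerSeries (Rloc S)) * r ∈ I) : I = ⊤ := by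
  by_contra hI
  have hJ : I.map (PowerSeries.constantCoeff (R := Rloc S)) ≠ ⊤ := by
    intro hJ
    have h1 : (1 : Rloc S) ∈ I.map (PowerSeries.constantCoeff (R := Rloc S)) := hJ ▸ trivial
    obtain ⟨y, hy, hy1⟩ := (Ideal.mem_map_iff_of_surjective _
      PowerSeries.constantCoeff_surj).1 h1
    exact hI (Ideal.eq_top_of_isUnit_mem _ hy
      (PowerSeries.isUnit_iff_constantCoeff.2 (by rw [hy1]; exact isUnit_one)))
  obtain ⟨m, hm, hJm⟩ := Ideal.exists_le_maximal _ hJ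
  haveI := hm.isPrime
  have hunit : ∀ s ∈ Submonoid.closure ((fun q : ℕ => (q : ℤ)) '' (S : Set ℕ)),
      s ∉ m.comap (algebraMap ℤ (Rloc S)) := by
    intro s hs hsm
    exact hm.ne_top (Ideal.eq_top_of_isUnit_mem _ hsm
      (IsLocalization.map_units (Rloc S) (⟨s, hs⟩ : Submonoid.closure _)))
  obtain ⟨ℓ, hℓ, hℓS, hle⟩ := prime_ideal_int S (m.comap (algebraMap ℤ (Rloc S)))
    (fun q hq => hunit _ (Submonoid.subset_closure ⟨q, hq, rfl⟩))
  obtain ⟨r, hr⟩ := h ℓ hℓ hℓS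
  have h2 := hJm (Ideal.mem_map_of_mem _ hr)
  simp only [map_sub, map_one, map_mul, map_natCast] at h2
  obtain ⟨⟨a, s⟩, hs⟩ := IsLocalization.surj
    (Submonoid.closure ((fun q : ℕ => (q : ℤ)) '' (S : Set ℕ))) (PowerSeries.constantCoeff r)
  have h3 : (s : ℤ) - ℓ * a ∈ m.comap (algebraMap ℤ (Rloc S)) := by
    rw [Ideal.mem_comap, map_sub, map_mul, ← hs, map_natCast]
    have := m.mul_mem_right (algebraMap ℤ (Rloc S) s) h2
    convert this using 1
    ring
  have h4 := Ideal.mem_span_singleton.1 (hle h3)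
  exact prime_not_dvd_monoid S hS ℓ hℓ hℓS s s.2 ((dvd_sub_left (dvd_mul_right _ _)).1 h4)

theorem ses_split_of_padic_baseChange_split
    (S : Finset ℕ) (hS : ∀ q ∈ S, Nat.Prime q)
    (A B C : Type*) [AddCommGroup A] [AddCommGroup B] [AddCommGroup C]
    [Module (PowerSeries (Rloc S)) A] [Module (PowerSeries (Rloc S)) B]
    [Module (PowerSeries (Rloc S)) C]
    [Module.Finite (PowerSeries (Rloc S)) A] [Module.Finite (PowerSeries (Rloc S)) B]
    [Module.Finite (PowerSeries (Rloc S)) C]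
    (f : A →ₗ[PowerSeries (Rloc S)] B) (g : B →ₗ[PowerSeries (Rloc S)] C)
    (hf : Function.Injective f) (hfg : Function.Exact f g) (hg : Function.Surjective g)
    (h : ∀ (ℓ : ℕ) [Fact ℓ.Prime], ℓ ∉ S →
      ∀ [Algebra (PowerSeries (Rloc S)) (PowerSeries ℤ_[ℓ])],
        (∃ φ : Rloc S →+* ℤ_[ℓ],
            algebraMap (PowerSeries (Rloc S)) (PowerSeries ℤ_[ℓ]) = PowerSeries.map φ) →
        Function.Injective (f.baseChange (PowerSeries ℤ_[ℓ])) ∧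
        Function.Exact (f.baseChange (PowerSeries ℤ_[ℓ]))
          (g.baseChange (PowerSeries ℤ_[ℓ])) ∧
        Function.Surjective (g.baseChange (PowerSeries ℤ_[ℓ])) ∧
        ∃ σ : PowerSeries ℤ_[ℓ] ⊗[PowerSeries (Rloc S)] C →ₗ[PowerSeries ℤ_[ℓ]]
            PowerSeries ℤ_[ℓ] ⊗[PowerSeries (Rloc S)] B,
          (g.baseChange (PowerSeries ℤ_[ℓ])).comp σ = LinearMap.id) :
    ∃ s : C →ₗ[PowerSeries (Rloc S)] B, g.comp s = LinearMap.id := by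
  haveI : IsNoetherianRing (Rloc S) :=
    IsLocalization.isNoetherianRing
      (Submonoid.closure ((fun q : ℕ => (q : ℤ)) '' (S : Set ℕ))) _ inferInstance
  obtain ⟨b, p, hp⟩ := Module.Finite.exists_fin' (PowerSeries (Rloc S)) C
  obtain ⟨a, q', hq'⟩ := Module.Finite.exists_fin' (PowerSeries (Rloc S)) (LinearMap.ker p)
  let q := (LinearMap.ker p).subtype ∘ₗ q'
  have hpq : p ∘ₗ q = 0 := by
    ext1 i
    ext
    simp [q]
  obtain ⟨φ, hφ⟩ := Module.projective_lifting_property g p hg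
  have hmem : ∀ z, (φ ∘ₗ q) z ∈ LinearMap.range f := by
    intro z
    refine (hfg _).1 ?_
    have h1 : g (φ (q z)) = p (q z) := LinearMap.congr_fun hφ (q z)
    rw [LinearMap.comp_apply, h1]
    exact LinearMap.congr_fun hpq z
  obtain ⟨u, hu'⟩ := Module.projective_lifting_property f.rangeRestrict
    ((φ ∘ₗ q).codRestrict _ hmem) f.surjective_rangeRestrict
  have hu : f ∘ₗ u = φ ∘ₗ q := by
    apply LinearMap.ext
    intro z
    exact congrArg Subtype.val (LinearMap.congr_fun hu' z)
  let N := LinearMap.range (LinearMap.lcomp (PowerSeries (Rloc S)) A q)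
  have htop : (N.comap (LinearMap.toSpanSingleton (PowerSeries (Rloc S)) _ u) :
      Ideal (PowerSeries (Rloc S))) = ⊤ := by
    apply ideal_top S hS
    intro ℓ hℓ hℓS
    haveI : Fact ℓ.Prime := ⟨hℓ⟩
    obtain ⟨χ, -⟩ := exists_phi S hS ℓ hℓS
    letI : Algebra (PowerSeries (Rloc S)) (PowerSeries ℤ_[ℓ]) := (PowerSeries.map χ).toAlgebra
    obtain ⟨hinj, hex, -, σ, hσ⟩ := h ℓ hℓS ⟨χ, rfl⟩
    refine krull_step N u (ℓ : PowerSeries (Rloc S)) fun n => ?_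
    obtain ⟨θ, hθ⟩ := exists_theta S hS ℓ hℓS n χ rfl
    obtain ⟨v, w, hvw⟩ := approx_lift f g p q hpq φ hφ u hu hinj hex σ hσ _ θ hθ
    exact ⟨v ∘ₗ q, ⟨v, rfl⟩, w, hvw⟩
  have huN : u ∈ N := by
    have h1 : (1 : PowerSeries (Rloc S)) ∈
      (N.comap (LinearMap.toSpanSingleton (PowerSeries (Rloc S)) _ u)) := htop ▸ trivial
    simpa using h1
  obtain ⟨v, hv⟩ := huN
  have hker : LinearMap.ker p ≤ LinearMap.ker (φ - f ∘ₗ v) := by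
    intro y hy
    obtain ⟨z, hz⟩ := hq' ⟨y, hy⟩
    have hz' : q z = y := congrArg Subtype.val hz
    have h1 : v (q z) = u z := LinearMap.congr_fun hv z
    have h2 : f (u z) = φ (q z) := LinearMap.congr_fun hu z
    rw [hz'] at h1 h2
    rw [LinearMap.mem_ker, LinearMap.sub_apply, LinearMap.comp_apply, h1, h2, sub_self]
  refine ⟨(LinearMap.ker p).liftQ (φ - f ∘ₗ v) hker ∘ₗ
    (p.quotKerEquivOfSurjective hp).symm.toLinearMap, ?_⟩
  apply LinearMap.ext
  intro c
  obtain ⟨y, rfl⟩ := hp c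
  have h1 : (p.quotKerEquivOfSurjective hp).symm (p y) = Submodule.Quotient.mk y := by
    rw [LinearEquiv.symm_apply_eq]
    rfl
  have h2 : g (φ y) = p y := LinearMap.congr_fun hφ y
  have h3 : g (f (v y)) = 0 := hfg.apply_apply_eq_zero _
  simp [h1, h2, h3]
end

section
/- Let 0 → A → B →^π Q → 0 be a short exact sequence of R-modules with pQ = 0 (identify A with its image in B). Then: (i) for every integer j ≥ 0 there is a well-defined R-linear map c_j : Q → p^j A / p^{j+1} A sending q ∈ Q to the class of p^j(p·q̃) for any lift q̃ ∈ B of q (note p·q̃ ∈ A since pQ = 0); (ii) there is an exact sequence of R-modules 0 → coker(c_0) → B/pB → Q → 0, where the first map is induced by the inclusion A ⊆ B and the second by π; and (iii) for every j ≥ 1 there is an exact sequence 0 → coker(c_j) → p^j B / p^{j+1} B → im(c_{j-1}) → 0, where the first map is induced by the inclusion p^j A ⊆ p^j B and the second map sends the class of p^j b (for b ∈ B) to the class of p^{j-1}(p·b) in p^{j-1} A / p^j A (note p·b ∈ A since π(p·b) = p·π(b) = 0). -/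
/-!
Context: `R` a commutative ring, `p ∈ R`.  For a submodule `A` of an `R`-module `B` we
write `p^j A` for `Ideal.span {p^j} • A` and `gr_p^j A := p^j A / p^{j+1} A`.

STATEMENT 11: given a short exact sequence `0 → A → B →^π Q → 0` of `R`-modules with
`pQ = 0` (where `A` is identified with its image in `B`, i.e. `A = ker π`):
(i) for each `j ≥ 0` there is a well-defined `R`-linear map `c_j : Q → p^j A / p^{j+1} A`
sending `q` to the class of `p^j (p·q̃)` for any lift `q̃` of `q`;
(ii) there is an exact sequence `0 → coker c₀ → B/pB → Q → 0`, the first map induced by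
the inclusion `A ⊆ B` and the second by `π`;
(iii) for every `j ≥ 1` (written below with `j + 1` in place of `j`) there is an exact
sequence `0 → coker c_j → p^j B / p^{j+1} B → im c_{j-1} → 0`, the first map induced by
the inclusion `p^j A ⊆ p^j B` and the second sending the class of `p^j b` to the class
of `p^{j-1}(p·b)`; exactness at the right means the range of the second map is the range
of `c_{j-1}`.
-/

/-- The submodule `p^j A` of `B`. -/
abbrev pPow (R : Type*) [CommRing R] (p : R) (j : ℕ) {B : Type*} [AddCommGroup B]
    [Module R B] (A : Submodule R B) : Submodule R B :=
  Ideal.span {p ^ j} • A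

/-- The graded piece `gr_p^j A = p^j A / p^{j+1} A`. -/
abbrev grQuot (R : Type*) [CommRing R] (p : R) (j : ℕ) {B : Type*} [AddCommGroup B]
    [Module R B] (A : Submodule R B) :=
  ↥(pPow R p j A) ⧸ (pPow R p (j + 1) A).comap (pPow R p j A).subtype

theorem mem_span_smul_aux {R : Type*} [CommRing R] (r : R) {B : Type*} [AddCommGroup B]
    [Module R B] (A : Submodule R B) (x : B) :
    x ∈ Ideal.span {r} • A ↔ ∃ a ∈ A, r • a = x := by
  rw [Submodule.ideal_span_singleton_smul, Submodule.mem_smul_pointwise_iff_exists]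

/-- The map `b ↦ [p^j (p b)]`. -/
noncomputable def preC {R : Type*} [CommRing R] (p : R) {B : Type*} [AddCommGroup B]
    [Module R B] (A : Submodule R B) (hA : ∀ b : B, p • b ∈ A) (j : ℕ) :
    B →ₗ[R] grQuot R p j A :=
  (Submodule.mkQ _).comp (LinearMap.codRestrict (pPow R p j A)
    (LinearMap.lsmul R B (p ^ j * p)) (fun b => by
      rw [LinearMap.lsmul_apply, mul_smul]
      exact Submodule.smul_mem_smul (Ideal.mem_span_singleton_self _) (hA b)))

theorem preC_apply {R : Type*} [CommRing R] (p : R) {B : Type*} [AddCommGroup B]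
    [Module R B] (A : Submodule R B) (hA : ∀ b : B, p • b ∈ A) (j : ℕ) (b : B) 
    (hb : p • b ∈ A) :
    preC p A hA j b = Submodule.Quotient.mk
          ⟨p ^ j • (p • b),
            Submodule.smul_mem_smul (Ideal.mem_span_singleton_self _) hb⟩ := by
  unfold preC
  simp only [LinearMap.comp_apply, Submodule.mkQ_apply]
  congr 1
  ext
  simp [mul_smul]

theorem graded_pieces_of_extension
    (R : Type*) [CommRing R] (p : R)
    (B Q : Type*) [AddCommGroup B] [Module R B] [AddCommGroup Q] [Module R Q]
    (A : Submodule R B) (π : B →ₗ[R] Q)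
    (hπ : Function.Surjective π) (hker : LinearMap.ker π = A)
    (hpQ : ∀ q : Q, p • q = 0) :
    ∃ c : (j : ℕ) → Q →ₗ[R] grQuot R p j A,
      -- (i) : the maps `c_j`, well defined independently of the chosen lift
      (∀ (j : ℕ) (b : B) (hb : p • b ∈ A),
        c j (π b) = Submodule.Quotient.mk
          ⟨p ^ j • (p • b),
            Submodule.smul_mem_smul (Ideal.mem_span_singleton_self _) hb⟩) ∧
      -- (ii) : 0 → coker c₀ → B/pB → Q → 0
      (∃ (ι : (grQuot R p 0 A ⧸ LinearMap.range (c 0)) →ₗ[R]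
            (B ⧸ (Ideal.span {p} • (⊤ : Submodule R B))))
          (π' : (B ⧸ (Ideal.span {p} • (⊤ : Submodule R B))) →ₗ[R] Q),
        (∀ x : ↥(pPow R p 0 A),
          ι (Submodule.Quotient.mk (Submodule.Quotient.mk x)) =
            Submodule.Quotient.mk (x : B)) ∧
        (∀ b : B, π' (Submodule.Quotient.mk b) = π b) ∧
        Function.Injective ι ∧ Function.Exact ι π' ∧ Function.Surjective π') ∧
      -- (iii) : 0 → coker c_{j+1} → p^{j+1}B/p^{j+2}B → im c_j → 0
      (∀ j : ℕ,
        ∃ (ι : (grQuot R p (j + 1) A ⧸ LinearMap.range (c (j + 1))) →ₗ[R]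
              grQuot R p (j + 1) (⊤ : Submodule R B))
          (d : grQuot R p (j + 1) (⊤ : Submodule R B) →ₗ[R] grQuot R p j A),
        (∀ x : ↥(pPow R p (j + 1) A),
          ι (Submodule.Quotient.mk (Submodule.Quotient.mk x)) =
            Submodule.Quotient.mk
              ⟨(x : B), Submodule.smul_mono le_rfl le_top x.2⟩) ∧
        (∀ (b : B) (hb : p • b ∈ A),
          d (Submodule.Quotient.mk
              ⟨p ^ (j + 1) • b,
                Submodule.smul_mem_smul (Ideal.mem_span_singleton_self _)
                  Submodule.mem_top⟩) =
            Submodule.Quotient.mk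
              ⟨p ^ j • (p • b),
                Submodule.smul_mem_smul (Ideal.mem_span_singleton_self _) hb⟩) ∧
        Function.Injective ι ∧ Function.Exact ι d ∧
        LinearMap.range d = LinearMap.range (c j)) := by
  have hA : ∀ b : B, p • b ∈ A := fun b => by
    rw [← hker, LinearMap.mem_ker, map_smul, hpQ]
  have hle : ∀ j, LinearMap.ker π ≤ LinearMap.ker (preC p A hA j) := by
    intro j a ha
    rw [hker] at ha
    rw [LinearMap.mem_ker, preC_apply p A hA j a (hA a), Submodule.Quotient.mk_eq_zero,
      Submodule.mem_comap, Submodule.subtype_apply, mem_span_smul_aux]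
    exact ⟨a, ha, by rw [pow_succ, mul_smul]⟩
  let c : (j : ℕ) → Q →ₗ[R] grQuot R p j A := fun j =>
    ((LinearMap.ker π).liftQ (preC p A hA j) (hle j)).comp
      (π.quotKerEquivOfSurjective hπ).symm.toLinearMap
  have hc : ∀ j b, c j (π b) = preC p A hA j b := by
    intro j b
    have : (π.quotKerEquivOfSurjective hπ).symm (π b) = Submodule.Quotient.mk b := by
      rw [LinearEquiv.symm_apply_eq]
      rfl
    simp only [c, LinearMap.comp_apply, LinearEquiv.coe_coe, this]
    rfl
  clear_value c
  refine ⟨c, ?_, ?_, ?_⟩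
  · intro j b hb
    rw [hc]
    exact preC_apply p A hA j b hb
  · let f : ↥(pPow R p 0 A) →ₗ[R] (B ⧸ (Ideal.span {p} • (⊤ : Submodule R B))) :=
      (Submodule.mkQ _).comp (pPow R p 0 A).subtype
    have hf : (pPow R p (0 + 1) A).comap (pPow R p 0 A).subtype ≤ LinearMap.ker f := by
      intro x hx
      rw [Submodule.mem_comap, mem_span_smul_aux] at hx
      obtain ⟨a, _, ha⟩ := hx
      rw [LinearMap.mem_ker]
      refine (Submodule.Quotient.mk_eq_zero _).2 ?_
      rw [mem_span_smul_aux]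
      exact ⟨a, trivial, by simpa using ha⟩
    have hg : LinearMap.range (c 0) ≤ LinearMap.ker (Submodule.liftQ _ f hf) := by
      rintro _ ⟨q, rfl⟩
      obtain ⟨b, rfl⟩ := hπ q
      rw [LinearMap.mem_ker, hc, preC_apply p A hA 0 b (hA b)]
      refine (Submodule.Quotient.mk_eq_zero _).2 ?_
      rw [mem_span_smul_aux]
      exact ⟨b, trivial, by simp⟩
    have hp : Ideal.span {p} • (⊤ : Submodule R B) ≤ LinearMap.ker π := by
      intro x hx
      rw [mem_span_smul_aux] at hx
      obtain ⟨b, _, rfl⟩ := hx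
      rw [hker]
      exact hA b
    refine ⟨Submodule.liftQ _ (Submodule.liftQ _ f hf) hg, Submodule.liftQ _ π hp,
      fun x => rfl, fun b => rfl, ?_, ?_, ?_⟩
    · rw [injective_iff_map_eq_zero]
      intro y hy
      obtain ⟨y, rfl⟩ := Submodule.Quotient.mk_surjective _ y
      obtain ⟨x, rfl⟩ := Submodule.Quotient.mk_surjective _ y
      have hy' := (Submodule.Quotient.mk_eq_zero _).1 hy
      rw [mem_span_smul_aux] at hy'
      obtain ⟨b, _, hb⟩ := hy'
      rw [Submodule.Quotient.mk_eq_zero]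
      refine ⟨π b, ?_⟩
      rw [hc, preC_apply p A hA 0 b (hA b)]
      congr 1
      ext
      simpa using hb
    · intro y
      obtain ⟨b, rfl⟩ := Submodule.Quotient.mk_surjective _ y
      constructor
      · intro h
        have hb : b ∈ A := by rw [← hker]; exact h
        refine ⟨Submodule.Quotient.mk (Submodule.Quotient.mk ⟨b, ?_⟩), rfl⟩
        rw [mem_span_smul_aux]
        exact ⟨b, hb, by simp⟩
      · rintro ⟨y, hy⟩
        obtain ⟨y, rfl⟩ := Submodule.Quotient.mk_surjective _ y
        obtain ⟨x, rfl⟩ := Submodule.Quotient.mk_surjective _ y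
        rw [← hy]
        change π x = 0
        obtain ⟨a, ha, hx⟩ := (mem_span_smul_aux _ _ _).1 x.2
        rw [← hx, map_smul, show π a = 0 by rwa [← hker] at ha, smul_zero]
    · intro q
      obtain ⟨b, rfl⟩ := hπ q
      exact ⟨Submodule.Quotient.mk b, rfl⟩
  · intro j
    have hi : pPow R p (j + 1) A ≤ pPow R p (j + 1) ⊤ := Submodule.smul_mono le_rfl le_top
    have hi' : pPow R p (j + 1 + 1) A ≤ pPow R p (j + 1 + 1) ⊤ :=
      Submodule.smul_mono le_rfl le_top
    have hd : ∀ k, pPow R p (k + 1) (⊤ : Submodule R B) ≤ pPow R p k A := by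
      intro k x hx
      rw [mem_span_smul_aux] at hx ⊢
      obtain ⟨b, _, rfl⟩ := hx
      exact ⟨p • b, hA b, by rw [pow_succ, mul_smul]⟩
    let f : grQuot R p (j + 1) A →ₗ[R] grQuot R p (j + 1) (⊤ : Submodule R B) :=
      Submodule.mapQ _ _ (Submodule.inclusion hi) (by
        intro x hx
        rw [Submodule.mem_comap, Submodule.subtype_apply] at hx
        rw [Submodule.mem_comap, Submodule.mem_comap, Submodule.subtype_apply,
          Submodule.coe_inclusion]
        exact hi' hx)
    let d : grQuot R p (j + 1) (⊤ : Submodule R B) →ₗ[R] grQuot R p j A :=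
      Submodule.mapQ _ _ (Submodule.inclusion (hd j)) (by
        intro x hx
        rw [Submodule.mem_comap, Submodule.subtype_apply] at hx
        rw [Submodule.mem_comap, Submodule.mem_comap, Submodule.subtype_apply,
          Submodule.coe_inclusion]
        exact hd (j + 1) hx)
    have hfx : ∀ x, f (Submodule.Quotient.mk x) =
        Submodule.Quotient.mk (Submodule.inclusion hi x) := fun x =>
      Submodule.mapQ_apply _ _ _ _
    have hdx : ∀ x, d (Submodule.Quotient.mk x) =
        Submodule.Quotient.mk (Submodule.inclusion (hd j) x) := fun x =>
      Submodule.mapQ_apply _ _ _ _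
    have hg : LinearMap.range (c (j + 1)) ≤ LinearMap.ker f := by
      rintro _ ⟨q, rfl⟩
      obtain ⟨b, rfl⟩ := hπ q
      rw [LinearMap.mem_ker, hc, preC_apply p A hA _ b (hA b), hfx,
        Submodule.Quotient.mk_eq_zero, Submodule.mem_comap, Submodule.subtype_apply,
        Submodule.coe_inclusion, mem_span_smul_aux]
      exact ⟨b, trivial, by rw [pow_succ, mul_smul]⟩
    have hdb : ∀ (b : B) (hb : p • b ∈ A),
          d (Submodule.Quotient.mk
              ⟨p ^ (j + 1) • b,
                Submodule.smul_mem_smul (Ideal.mem_span_singleton_self _)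
                  Submodule.mem_top⟩) =
            Submodule.Quotient.mk
              ⟨p ^ j • (p • b),
                Submodule.smul_mem_smul (Ideal.mem_span_singleton_self _) hb⟩ := by
      intro b hb
      rw [hdx]
      refine congrArg (Submodule.Quotient.mk
        (p := (pPow R p (j + 1) A).comap (pPow R p j A).subtype)) (Subtype.ext ?_)
      rw [Submodule.coe_inclusion]
      change p ^ (j + 1) • b = p ^ j • (p • b)
      rw [pow_succ, mul_smul]
    have hιx : ∀ x : ↥(pPow R p (j + 1) A),
          Submodule.liftQ _ f hg (Submodule.Quotient.mk (Submodule.Quotient.mk x)) =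
            Submodule.Quotient.mk
              ⟨(x : B), Submodule.smul_mono le_rfl le_top x.2⟩ := by
      intro x
      exact (Submodule.liftQ_apply _ f _).trans (hfx x)
    refine ⟨Submodule.liftQ _ f hg, d, hιx, hdb, ?_, ?_, ?_⟩
    · rw [injective_iff_map_eq_zero]
      intro y hy
      obtain ⟨y, rfl⟩ := Submodule.Quotient.mk_surjective _ y
      obtain ⟨x, rfl⟩ := Submodule.Quotient.mk_surjective _ y
      have hy' := hy
      rw [hιx, Submodule.Quotient.mk_eq_zero, Submodule.mem_comap, Submodule.subtype_apply,
        mem_span_smul_aux] at hy'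
      obtain ⟨b, _, hb⟩ := hy'
      rw [Submodule.Quotient.mk_eq_zero]
      refine ⟨π b, ?_⟩
      rw [hc, preC_apply p A hA _ b (hA b)]
      congr 1
      ext
      rw [pow_succ, mul_smul] at hb
      exact hb
    · intro y
      obtain ⟨x, rfl⟩ := Submodule.Quotient.mk_surjective _ y
      constructor
      · intro h
        rw [hdx, Submodule.Quotient.mk_eq_zero, Submodule.mem_comap, Submodule.subtype_apply,
          Submodule.coe_inclusion] at h
        have hx : (x : B) ∈ pPow R p (j + 1) A := h
        exact ⟨Submodule.Quotient.mk (Submodule.Quotient.mk ⟨x, hx⟩), (hιx ⟨x, hx⟩).trans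
          (congrArg (Submodule.Quotient.mk
            (p := (pPow R p (j + 1 + 1) ⊤).comap (pPow R p (j + 1) ⊤).subtype))
            (Subtype.ext rfl))⟩
      · rintro ⟨y, hy⟩
        obtain ⟨y, rfl⟩ := Submodule.Quotient.mk_surjective _ y
        obtain ⟨x, rfl⟩ := Submodule.Quotient.mk_surjective _ y
        rw [← hy, hιx, hdx, Submodule.Quotient.mk_eq_zero, Submodule.mem_comap,
          Submodule.subtype_apply, Submodule.coe_inclusion]
        exact x.2
    · apply le_antisymm
      · rintro _ ⟨y, rfl⟩
        obtain ⟨⟨x, hx⟩, rfl⟩ := Submodule.Quotient.mk_surjective _ y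
        obtain ⟨b, _, rfl⟩ := (mem_span_smul_aux _ _ _).1 hx
        exact ⟨π b, by rw [hc, preC_apply p A hA _ b (hA b), hdb b (hA b)]⟩
      · rintro _ ⟨q, rfl⟩
        obtain ⟨b, rfl⟩ := hπ q
        exact ⟨_, by rw [hc, preC_apply p A hA _ b (hA b)]; exact hdb b (hA b)⟩
end
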